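/- Let L and K be Hopf subalgebras of H. Then (L, K) is a Mackey pair if and only if for every simple subcoalgebra C of H one has dim_k(LCK) = (dim_k L)·(dim_k CK)/dim_k(L ∩ {}^C K). Moreover (L, K) is a Mackey pair as soon as the left-multiplication map π_k for the trivial K-module M = k is an isomorphism. -/

import Mathlib

open TensorProduct

namespace MackeyPaper

noncomputable section

universe v

variable (k : Type) [Field k] [CharZero k] [IsAlgClosed k]
variable (H : Type) [Ring H] [HopfAlgebra k H]

/-- A subcoalgebra of `H`: a `k`-subspace `C` with `Δ(C) ⊆ C ⊗ C`. -/
def IsSubcoalgebra (C : Submodule k H) : Prop :=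
  ∀ c ∈ C, Coalgebra.comul (R := k) c ∈
    LinearMap.range (TensorProduct.map C.subtype C.subtype)

/-- A simple (nonzero, minimal) subcoalgebra of `H`. -/
def IsSimpleSubcoalgebra (C : Submodule k H) : Prop :=
  IsSubcoalgebra k H C ∧ C ≠ ⊥ ∧
    ∀ D : Submodule k H, D ≤ C → IsSubcoalgebra k H D → D ≠ ⊥ → D = C

/-- A Hopf subalgebra of `H`: a subalgebra which is a subcoalgebra and is
stable under the antipode. -/
def IsHopfSubalgebra (K : Subalgebra k H) : Prop :=
  IsSubcoalgebra k H K.toSubmodule ∧ ∀ x ∈ K, HopfAlgebra.antipode (R := k) x ∈ K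

/-- `Λ` is the (two-sided) idempotent integral of the Hopf subalgebra `K`,
i.e. the integral normalized by `ε(Λ) = 1`. -/
def IsIdempotentIntegral (K : Subalgebra k H) (Λ : H) : Prop :=
  Λ ∈ K ∧ Coalgebra.counit (R := k) Λ = 1 ∧
    ∀ x ∈ K, x * Λ = Coalgebra.counit (R := k) x • Λ ∧
      Λ * x = Coalgebra.counit (R := k) x • Λ

/-- A cocommutative element of `H`; the cocommutative elements of `H` form
the character ring `C(H^*)`. -/
def IsCocomm (x : H) : Prop :=
  (TensorProduct.comm k H H) (Coalgebra.comul (R := k) x) = Coalgebra.comul (R := k) x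

/-- The character ring `C(H^*)`, i.e. the space of cocommutative elements of `H`,
as a `k`-subspace of `H`. -/
def charRing : Submodule k H :=
  LinearMap.ker ((TensorProduct.comm k H H).toLinearMap ∘ₗ Coalgebra.comul (R := k)
      - Coalgebra.comul (R := k))

/-- `d` is the irreducible character (of `H^*`) associated to the simple
subcoalgebra `C`: the unique cocommutative element of `C` whose counit is the
positive square root of `dim_k C`. -/
def IsCharacterOf (d : H) (C : Submodule k H) : Prop :=
  d ∈ C ∧ IsCocomm k H d ∧
    Coalgebra.counit (R := k) d = ((Nat.sqrt (Module.finrank k ↥C) : ℕ) : k)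

/-- The right coset `CK` of a subcoalgebra `C`, i.e. the subspace `C·K`. -/
def CKsub (K : Subalgebra k H) (C : Submodule k H) : Submodule k H :=
  C * K.toSubmodule

/-- The conjugate Hopf subalgebra `ᶜK` of `K` by a simple subcoalgebra `C`
(with associated irreducible character `c`): the span of all simple
subcoalgebras of `H` whose irreducible character `d` satisfies
`d·c·Λ_K = ε(d)·c·Λ_K`.  (The condition is stated for all cocommutative
elements of `C` resp. `D`; this is equivalent, since the cocommutative
elements of a simple subcoalgebra are exactly the scalar multiples of its
irreducible character.) -/
def conjK (K : Subalgebra k H) (Λ : H) (C : Submodule k H) : Submodule k H :=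
  sSup {D : Submodule k H | IsSimpleSubcoalgebra k H D ∧
    ∀ d ∈ D, IsCocomm k H d → ∀ c ∈ C, IsCocomm k H c →
      d * (c * Λ) = Coalgebra.counit (R := k) d • (c * Λ)}

/-- A complete irredundant system of representatives (by simple subcoalgebras)
of the double cosets `L\H/K`.  (Taking `L = ⊥` gives a system of
representatives of the right cosets `H/K`.) -/
def IsDoubleCosetReps (L K : Subalgebra k H) {ι : Type} (rep : ι → Submodule k H) : Prop :=
  (∀ i, IsSimpleSubcoalgebra k H (rep i)) ∧
  (∀ i j, L.toSubmodule * rep i * K.toSubmodule = L.toSubmodule * rep j * K.toSubmodule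
      → i = j) ∧
  (∀ C : Submodule k H, IsSimpleSubcoalgebra k H C →
      ∃ i, C ≤ L.toSubmodule * rep i * K.toSubmodule)

section Ind

variable (K : Subalgebra k H) (M : Type v) [AddCommGroup M] [Module k M]
  [Module ↥K M] [IsScalarTower k ↥K M]

/-- The relations defining the induced module `H ⊗_K M` as a quotient of
`H ⊗_k M`: the `H`-submodule generated by the elements `a ⊗ m - 1 ⊗ a·m`
for `a ∈ K` (equivalently, spanned by all `h·a ⊗ m - h ⊗ a·m`). -/
def indRel : Submodule H (H ⊗[k] M) :=
  Submodule.span H {z | ∃ (a : ↥K) (m : M),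
    z = (a : H) ⊗ₜ[k] m - (1 : H) ⊗ₜ[k] (a • m)}

/-- The induced module `M↑_K^H = H ⊗_K M`, a left `H`-module. -/
abbrev Ind := (H ⊗[k] M) ⧸ indRel k H K M

variable (C : Submodule k H)

/-- The underlying space `CK ⊗_k M` of which the conjugate module `ᶜM` is a
quotient. -/
def CKM : Type _ := ↥(CKsub k H K C) ⊗[k] M

instance : AddCommGroup (CKM k H K M C) :=
  inferInstanceAs (AddCommGroup (↥(CKsub k H K C) ⊗[k] M))

instance : Module k (CKM k H K M C) :=
  inferInstanceAs (Module k (↥(CKsub k H K C) ⊗[k] M))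

/-- The pure tensor `x ⊗ m` as an element of `CK ⊗_k M`. -/
def ckmk (x : ↥(CKsub k H K C)) (m : M) : CKM k H K M C := x ⊗ₜ[k] m

/-- The relations defining the conjugate module `ᶜM = CK ⊗_K M` as a quotient
of `CK ⊗_k M`: `x·a ⊗ m - x ⊗ a·m` for `a ∈ K`. -/
def conjRel : Submodule k (CKM k H K M C) :=
  Submodule.span k {z | ∃ (x : ↥(CKsub k H K C)) (a : ↥K) (m : M)
    (hxa : (x : H) * (a : H) ∈ CKsub k H K C),
    z = ckmk k H K M C ⟨(x : H) * (a : H), hxa⟩ m - ckmk k H K M C x (a • m)}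

/-- The conjugate module `ᶜM := CK ⊗_K M`. -/
abbrev ConjM := CKM k H K M C ⧸ conjRel k H K M C

/-- The canonical copy of the conjugate module `ᶜM = CK ⊗_K M` inside
`H ⊗_K M` (the image of `CK ⊗_K M` under multiplication; this is indeed a
copy of `ᶜM` since `H` is a free right `K`-module and `CK` is one of the
coset summands). -/
def conjMsub : Submodule k (Ind k H K M) :=
  Submodule.span k {z | ∃ (x : H) (_ : x ∈ CKsub k H K C) (m : M),
    z = Submodule.Quotient.mk (x ⊗ₜ[k] m)}

end Ind

section Comp

variable (L K : Subalgebra k H) (Λ : H) (C : Submodule k H)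
variable (M : Type v) [AddCommGroup M] [Module k M] [Module ↥K M] [IsScalarTower k ↥K M]

/-- The underlying space `L ⊗_k (CK ⊗_k M)`. -/
def LCM : Type _ := ↥L ⊗[k] CKM k H K M C

instance : AddCommGroup (LCM k H L K C M) :=
  inferInstanceAs (AddCommGroup (↥L ⊗[k] CKM k H K M C))

instance : Module k (LCM k H L K C M) :=
  inferInstanceAs (Module k (↥L ⊗[k] CKM k H K M C))

/-- The pure tensor `l ⊗ w` as an element of `L ⊗_k (CK ⊗_k M)`. -/
def lcmk (l : ↥L) (w : CKM k H K M C) : LCM k H L K C M := l ⊗ₜ[k] w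

/-- The relations defining `L ⊗_{L ∩ ᶜK} ᶜM` as a quotient of
`L ⊗_k (CK ⊗_k M)`: the balancedness relations over `L ∩ ᶜK` (first set),
together with (the image of) the relations defining `ᶜM = CK ⊗_K M`
(second set). -/
def compRel : Submodule k (LCM k H L K C M) :=
  Submodule.span k
    ({z | ∃ (l : ↥L) (a : H) (haL : a ∈ L) (_ : a ∈ conjK k H K Λ C)
        (x : ↥(CKsub k H K C)) (m : M) (hax : a * (x : H) ∈ CKsub k H K C),
        z = lcmk k H L K C M ⟨(l : H) * a, mul_mem l.2 haL⟩ (ckmk k H K M C x m)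
          - lcmk k H L K C M l (ckmk k H K M C ⟨a * (x : H), hax⟩ m)} ∪
     {z | ∃ (l : ↥L) (x : ↥(CKsub k H K C)) (a : ↥K) (m : M)
        (hxa : (x : H) * (a : H) ∈ CKsub k H K C),
        z = lcmk k H L K C M l (ckmk k H K M C ⟨(x : H) * (a : H), hxa⟩ m)
          - lcmk k H L K C M l (ckmk k H K M C x (a • m))})

/-- The module `L ⊗_{L ∩ ᶜK} ᶜM` (a left `L`-module via multiplication on the
first tensor factor). -/
abbrev Comp := LCM k H L K C M ⧸ compRel k H L K Λ C M

end Comp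

open DirectSum

section Mackey

variable (L K : Subalgebra k H) (Λ : H)

/-- The Mackey isomorphism property for the pair `(L, K)` at the `K`-module
`M`: for any system of double coset representatives, the left-multiplication
map `⊕_C L ⊗_{L ∩ ᶜK} ᶜM → M↑_K^H↓_L^H`, `l ⊗ v ↦ l·v`, is an isomorphism of
`L`-modules.  (A `k`-linear map satisfying the displayed formula on the
spanning elements is automatically `L`-equivariant for the evident
`L`-actions, so this property is stated for `k`-linear maps.) -/
def MackeyAt (M : Type v) [AddCommGroup M] [Module k M] [Module ↥K M]
    [IsScalarTower k ↥K M] [Module.Finite k M] : Prop :=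
  ∀ (ι : Type) [DecidableEq ι] (rep : ι → Submodule k H),
    IsDoubleCosetReps k H L K rep →
    ∃ π : (⨁ i : ι, Comp k H L K Λ (rep i) M) →ₗ[k] Ind k H K M,
      Function.Bijective π ∧
      ∀ (i : ι) (l : ↥L) (x : ↥(CKsub k H K (rep i))) (m : M),
        π (DirectSum.of (fun i => Comp k H L K Λ (rep i) M) i
            (Submodule.Quotient.mk (lcmk k H L K (rep i) M l (ckmk k H K M (rep i) x m)))) =
          Submodule.Quotient.mk (((l : H) * (x : H)) ⊗ₜ[k] m)

/-- `(L, K)` is a Mackey pair of Hopf subalgebras of `H` (here `Λ` is the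
idempotent integral of `K`): for every finite-dimensional `K`-module `M` the
left-multiplication homomorphism `π_M` is an isomorphism. -/
def IsMackeyPair : Prop :=
  ∀ (M : Type v) [AddCommGroup M] [Module k M] [Module ↥K M]
    [IsScalarTower k ↥K M] [Module.Finite k M], MackeyAt k H L K Λ M

end Mackey

/-!
Let `Λ` be the idempotent integral of a Hopf subalgebra `K` acting on `M`. The Casimir operator
`h ⊗ m ↦ hΛ₁ ⊗ S(Λ₂)m` is an idempotent on `H ⊗ M` whose kernel consists of the balancing
relations `ha ⊗ m - h ⊗ am`. Hence `H ⊗_K M`, its subspace spanned by a double coset `LCK`, and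
`L ⊗_{L ∩ ᶜK} ᶜM` are images of products of commuting idempotents, and their dimensions are
traces. In `L ⊗_{L ∩ ᶜK} ᶜM` this uses that `ᶜK` is the largest subcoalgebra `B` with
`B · CK ⊆ CK`, which makes `L ∩ ᶜK` a Hopf subalgebra. The traces yield
`dim LCK · dim M / dim K` for the image of `L ⊗_{L ∩ ᶜK} ᶜM` in `H ⊗_K M`, and
`dim L · dim CK · dim M / (dim (L ∩ ᶜK) · dim K)` for the module itself.

Since `H` is the direct sum of its double cosets, `π_M` is onto, and it is bijective as soon as the
two dimensions agree for every `C`. Conversely, injectivity of `π_M` on the summand of `C`, for a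
single nonzero `M` such as the trivial module, forces them to agree.

The projections onto subcoalgebras come from the form `(x, y) ↦ λ(S(x) y)` of a cointegral `λ`,
for which distinct simple subcoalgebras are orthogonal. The form is symmetric because `S² = 1`.
The proof of `S² = 1` starts from `S⁴ = 1`: on a semisimple algebra the Nakayama automorphism of
finite order has nonzero trace, because in algebraic numbers embedded into `ℂ` the trace of a
matrix of finite order times the trace of its inverse is the square of an absolute value.
-/

section Slices

open Coalgebra LinearMap

variable {k C : Type*} [Field k] [AddCommGroup C] [Module k C] [Coalgebra k C]

/-- The right action `x ↦ ∑ f(x₁) x₂` of a functional `f` on a coalgebra. -/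
def evalFst : Module.Dual k C →ₗ[k] Module.End k C where
  toFun f := TensorProduct.lid k C ∘ₗ f.rTensor C ∘ₗ comul
  map_add' f g := by rw [rTensor_add, add_comp, comp_add]
  map_smul' a f := by rw [rTensor_smul, smul_comp, comp_smul, RingHom.id_apply]

/-- The left action `x ↦ ∑ f(x₂) x₁` of a functional `f` on a coalgebra. -/
def evalSnd : Module.Dual k C →ₗ[k] Module.End k C where
  toFun f := TensorProduct.rid k C ∘ₗ f.lTensor C ∘ₗ comul
  map_add' f g := by rw [lTensor_add, add_comp, comp_add]
  map_smul' a f := by rw [lTensor_smul, smul_comp, comp_smul, RingHom.id_apply]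

lemma evalFst_apply (f : Module.Dual k C) (x : C) :
    evalFst f x = TensorProduct.lid k C (f.rTensor C (comul x)) := rfl

lemma evalSnd_apply (f : Module.Dual k C) (x : C) :
    evalSnd f x = TensorProduct.rid k C (f.lTensor C (comul x)) := rfl

lemma evalFst_eq_sum (f : Module.Dual k C) {x : C} {ι : Type*} (r : Repr k x ι) :
    evalFst f x = ∑ i ∈ r.index, f (r.left i) • r.right i := by
  simp [evalFst_apply, ← r.eq]

lemma evalSnd_eq_sum (f : Module.Dual k C) {x : C} {ι : Type*} (r : Repr k x ι) :
    evalSnd f x = ∑ i ∈ r.index, f (r.right i) • r.left i := by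
  simp [evalSnd_apply, ← r.eq]

@[simp]
lemma evalFst_counit : evalFst (counit : C →ₗ[k] k) = 1 := by
  ext x; simp [evalFst_apply]

@[simp]
lemma evalSnd_counit : evalSnd (counit : C →ₗ[k] k) = 1 := by
  ext x; simp [evalSnd_apply]

lemma sum_counit_right_smul {x : C} {ι : Type*} (r : Repr k x ι) :
    ∑ i ∈ r.index, counit (R := k) (r.right i) • r.left i = x := by
  rw [← evalSnd_eq_sum, evalSnd_counit, Module.End.one_apply]

lemma apply_evalFst (f g : Module.Dual k C) (x : C) : g (evalFst f x) = f (evalSnd g x) := by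
  rw [evalFst_eq_sum f (ℛ k x), evalSnd_eq_sum g (ℛ k x), map_sum, map_sum]
  simp only [map_smul, smul_eq_mul, mul_comm]

@[simp]
lemma counit_evalFst (f : Module.Dual k C) (x : C) : counit (R := k) (evalFst f x) = f x := by
  simp [apply_evalFst]

@[simp]
lemma counit_evalSnd (f : Module.Dual k C) (x : C) : counit (R := k) (evalSnd f x) = f x := by
  simp [← apply_evalFst]

lemma comul_evalFst (f : Module.Dual k C) (x : C) :
    comul (R := k) (evalFst f x) = (evalFst f).rTensor C (comul x) := by
  have hcoassoc := coassoc_apply (R := k) x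
  have key : ∀ z : C ⊗[k] C, (evalFst f).rTensor C z =
      TensorProduct.lid k (C ⊗[k] C)
        (f.rTensor (C ⊗[k] C) (TensorProduct.assoc k C C C (comul.rTensor C z))) := by
    intro z
    induction z with
    | zero => simp
    | add x y hx hy => simp only [map_add, hx, hy]
    | tmul a b =>
      rw [rTensor_tmul, rTensor_tmul, evalFst_eq_sum f (ℛ k a), ← (ℛ k a).eq]
      simp [TensorProduct.sum_tmul, TensorProduct.smul_tmul']
  rw [key, hcoassoc, evalFst_apply]
  induction comul (R := k) x with
  | zero => simp
  | add x y hx hy => simp only [map_add, hx, hy]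
  | tmul a b => simp

lemma comul_evalSnd (f : Module.Dual k C) (x : C) :
    comul (R := k) (evalSnd f x) = (evalSnd f).lTensor C (comul x) := by
  have hcoassoc := coassoc_symm_apply (R := k) x
  have key : ∀ z : C ⊗[k] C, (evalSnd f).lTensor C z =
      TensorProduct.rid k (C ⊗[k] C)
        (f.lTensor (C ⊗[k] C) ((TensorProduct.assoc k C C C).symm (comul.lTensor C z))) := by
    intro z
    induction z with
    | zero => simp
    | add x y hx hy => simp only [map_add, hx, hy]
    | tmul a b =>
      rw [lTensor_tmul, lTensor_tmul, evalSnd_eq_sum f (ℛ k b), ← (ℛ k b).eq]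
      simp [TensorProduct.tmul_sum]
  rw [key, hcoassoc, evalSnd_apply]
  induction comul (R := k) x with
  | zero => simp
  | add x y hx hy => simp only [map_add, hx, hy]
  | tmul a b => simp

lemma evalFst_evalSnd (f g : Module.Dual k C) (x : C) :
    evalFst f (evalSnd g x) = evalSnd g (evalFst f x) := by
  rw [evalFst_apply, comul_evalSnd, evalFst_apply]
  induction comul (R := k) x with
  | zero => simp
  | add x y hx hy => simp only [map_add, hx, hy]
  | tmul a b => simp

lemma evalFst_evalFst (f g : Module.Dual k C) (x : C) :
    evalFst f (evalFst g x) = evalFst (f ∘ₗ evalFst g) x := by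
  rw [evalFst_apply, comul_evalFst, evalFst_apply, rTensor_comp_apply]

/-- The expansion `Δ(x) = ∑ bᵢ ⊗ xᵢ` along a basis in the first factor; here
`xᵢ = evalFst (b.coord i) x`. -/
def basisRepr {ι : Type*} [Fintype ι] (b : Module.Basis ι k C) (x : C) : Repr k x ι where
  index := Finset.univ
  left := b
  right i := evalFst (b.coord i) x
  eq := by
    simp only [evalFst_apply]
    induction comul (R := k) x with
    | zero => simp
    | add x y hx hy => simp only [map_add, TensorProduct.tmul_add, Finset.sum_add_distrib, hx, hy]
    | tmul c d =>
      simp_rw [rTensor_tmul, TensorProduct.lid_tmul, ← TensorProduct.smul_tmul]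
      rw [← TensorProduct.sum_tmul]
      exact congrArg (· ⊗ₜ[k] d) (b.sum_repr c)

lemma sum_evalSnd_tmul_basis {ι : Type*} [Fintype ι] (b : Module.Basis ι k C) (x : C) :
    ∑ i, evalSnd (b.coord i) x ⊗ₜ[k] b i = comul x := by
  simp only [evalSnd_apply]
  induction comul (R := k) x with
  | zero => simp
  | add x y hx hy => simp only [map_add, TensorProduct.add_tmul, Finset.sum_add_distrib, hx, hy]
  | tmul c d =>
    simp_rw [lTensor_tmul, TensorProduct.rid_tmul, TensorProduct.smul_tmul]
    rw [← TensorProduct.tmul_sum]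
    exact congrArg (c ⊗ₜ[k] ·) (b.sum_repr d)

end Slices

section ConvolutionIdentities

open Coalgebra HopfAlgebra WithConv Algebra.TensorProduct

variable {k H B : Type*} [Field k] [Ring H] [HopfAlgebra k H] [Ring B] [Algebra k B]

lemma toConv_mul_toConv_comp_antipode (f : H →ₐ[k] B) :
    toConv f.toLinearMap * toConv (f.toLinearMap ∘ₗ antipode k) = 1 := by
  ext x
  rw [(ℛ k x).convMul_apply, LinearMap.convOne_apply]
  simp [← map_mul, ← map_sum, sum_mul_antipode_eq_algebraMap_counit]

lemma toConv_comp_antipode_mul_toConv (f : H →ₐ[k] B) :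
    toConv (f.toLinearMap ∘ₗ antipode k) * toConv f.toLinearMap = 1 := by
  ext x
  rw [(ℛ k x).convMul_apply, LinearMap.convOne_apply]
  simp [← map_mul, ← map_sum, sum_antipode_mul_eq_algebraMap_counit]

lemma toConv_comul : toConv (Bialgebra.comulAlgHom k H).toLinearMap =
    toConv (includeLeft : H →ₐ[k] H ⊗[k] H).toLinearMap *
      toConv (includeRight : H →ₐ[k] H ⊗[k] H).toLinearMap := by
  ext x
  rw [(ℛ k x).convMul_apply]
  simp [(ℛ k x).eq]

lemma tmul_one_eq_sum {x : H} {ι : Type*} (r : Repr k x ι) :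
    x ⊗ₜ[k] (1 : H) = ∑ i ∈ r.index, comul (r.left i) * (1 ⊗ₜ antipode k (r.right i)) := by
  have h := congrArg
    (fun f : WithConv (H →ₗ[k] H ⊗[k] H) =>
      (f * toConv ((includeRight : H →ₐ[k] H ⊗[k] H).toLinearMap ∘ₗ antipode k)) x)
    toConv_comul
  rw [mul_assoc, toConv_mul_toConv_comp_antipode, mul_one, r.convMul_apply] at h
  exact h.symm

lemma toConv_comul_comp_antipode :
    toConv ((Bialgebra.comulAlgHom k H).toLinearMap ∘ₗ antipode k) =
      toConv ((includeRight : H →ₐ[k] H ⊗[k] H).toLinearMap ∘ₗ antipode k) *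
        toConv ((includeLeft : H →ₐ[k] H ⊗[k] H).toLinearMap ∘ₗ antipode k) := by
  refine left_inv_eq_right_inv (toConv_comp_antipode_mul_toConv _) ?_
  rw [toConv_comul, mul_assoc, ← mul_assoc (toConv (includeRight : H →ₐ[k] _).toLinearMap),
    toConv_mul_toConv_comp_antipode, one_mul, toConv_mul_toConv_comp_antipode]

lemma comul_antipode (x : H) : comul (R := k) (antipode k x) =
    TensorProduct.comm k H H (TensorProduct.map (antipode k) (antipode k) (comul x)) := by
  have h := congrArg (fun f : WithConv (H →ₗ[k] H ⊗[k] H) => f x) toConv_comul_comp_antipode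
  rw [(ℛ k x).convMul_apply] at h
  rw [← (ℛ k x).eq]
  simpa using h

lemma antipode_tmul_one_eq_sum {x : H} {ι : Type*} (r : Repr k x ι) :
    antipode k x ⊗ₜ[k] (1 : H) =
      ∑ i ∈ r.index, (1 ⊗ₜ r.left i) * comul (antipode k (r.right i)) := by
  have h := congrArg
    (fun f : WithConv (H →ₗ[k] H ⊗[k] H) =>
      (toConv (includeRight : H →ₐ[k] H ⊗[k] H).toLinearMap * f) x)
    toConv_comul_comp_antipode
  rw [← mul_assoc, toConv_mul_toConv_comp_antipode, one_mul, r.convMul_apply] at h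
  exact h.symm

end ConvolutionIdentities

lemma trace_eq_sum_basis {R M : Type*} [CommRing R] [AddCommGroup M] [Module R M]
    (T : Module.End R M) {ι : Type*} [Fintype ι] (b : Module.Basis ι R M) :
    LinearMap.trace R M T = ∑ i, b.coord i (T (b i)) := by
  classical
  simp [LinearMap.trace_eq_matrix_trace R b, Matrix.trace, LinearMap.toMatrix_apply]

lemma evalFst_one {k H : Type*} [Field k] [Ring H] [HopfAlgebra k H] (f : Module.Dual k H) :
    evalFst f 1 = f 1 • 1 := by
  simp [evalFst_apply, Algebra.TensorProduct.one_def]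

lemma evalSnd_one {k H : Type*} [Field k] [Ring H] [HopfAlgebra k H] (f : Module.Dual k H) :
    evalSnd f 1 = f 1 • 1 := by
  simp [evalSnd_apply, Algebra.TensorProduct.one_def]

section SemisimpleAlgebra

variable {k A : Type*} [Field k] [Ring A] [Algebra k A] [IsSemisimpleRing A]

lemma exists_mul_eq_smul (ε : A →ₐ[k] k) : ∃ Λ : A, ε Λ = 1 ∧ ∀ h, h * Λ = ε h • Λ := by
  let I : Submodule A A := RingHom.ker ε.toRingHom
  obtain ⟨J, hJ⟩ := exists_isCompl I
  obtain ⟨i, hi, j, hj, hij⟩ := Submodule.mem_sup.1 (hJ.sup_eq_top ▸ Submodule.mem_top (x := 1))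
  have hεj : ε j = 1 := by
    have hεi : ε i = 0 := hi
    simpa [hεi] using congrArg ε hij
  refine ⟨j, hεj, fun h => sub_eq_zero.1 (hJ.disjoint.le_bot ⟨?_, ?_⟩)⟩
  · change ε (h * j - ε h • j) = 0
    simp
  · have hsub : h * j - ε h • j = (h - algebraMap k A (ε h)) • j := by
      simp [sub_mul, Algebra.smul_def]
    exact hsub ▸ J.smul_mem _ hj

end SemisimpleAlgebra

section Integral

open Coalgebra HopfAlgebra LinearMap

section AbsorbingElement

variable {k H : Type*} [Field k] [Ring H] [HopfAlgebra k H]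

lemma comul_mul_tmul_one {x h : H} {ι : Type*} (r : Repr k h ι)
    (hx : ∀ i ∈ r.index, x * r.left i = counit (R := k) (r.left i) • x) :
    comul x * (h ⊗ₜ[k] 1) = comul x * (1 ⊗ₜ antipode k h) := by
  rw [tmul_one_eq_sum r, Finset.mul_sum]
  conv_rhs => rw [← sum_counit_smul r, map_sum, TensorProduct.tmul_sum, Finset.mul_sum]
  refine Finset.sum_congr rfl fun i hi => ?_
  rw [← mul_assoc, ← Bialgebra.comul_mul, hx i hi, map_smul, map_smul,
    TensorProduct.tmul_smul, smul_mul_assoc, mul_smul_comm]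

lemma antipode_tmul_one_mul_comul {x h : H} {ι : Type*} (r : Repr k h ι)
    (hx : ∀ i ∈ r.index,
      antipode k (r.right i) * x = counit (R := k) (r.right i) • x) :
    (antipode k h ⊗ₜ[k] 1) * comul x = (1 ⊗ₜ h) * comul x := by
  rw [antipode_tmul_one_eq_sum r, Finset.sum_mul]
  conv_rhs => rw [← sum_counit_right_smul r, TensorProduct.tmul_sum, Finset.sum_mul]
  refine Finset.sum_congr rfl fun i hi => ?_
  rw [mul_assoc, ← Bialgebra.comul_mul, hx i hi, map_smul, TensorProduct.tmul_smul,
    smul_mul_assoc, mul_smul_comm]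

lemma evalSnd_comp_mulRight_antipode (f : Module.Dual k H) {x h : H} {ι : Type*} (r : Repr k h ι)
    (hx : ∀ i ∈ r.index, x * r.left i = counit (R := k) (r.left i) • x) :
    evalSnd (f ∘ₗ mulRight k (antipode k h)) x = evalSnd f x * h := by
  have hcomul := congrArg ((TensorProduct.rid k H).toLinearMap ∘ₗ f.lTensor H)
    (comul_mul_tmul_one r hx)
  rw [evalSnd_eq_sum _ (ℛ k x), evalSnd_eq_sum _ (ℛ k x)]
  simpa [← (ℛ k x).eq, Finset.sum_mul] using hcomul.symm

end AbsorbingElement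

variable {k H : Type*} [Field k] [Ring H] [HopfAlgebra k H] [IsSemisimpleRing H]

variable (k H) in
lemma exists_integral : ∃ Λ : H, counit (R := k) Λ = 1 ∧
    (∀ h, h * Λ = counit (R := k) h • Λ) ∧ ∀ h, Λ * h = counit (R := k) h • Λ := by
  obtain ⟨x, hx1, hx⟩ := exists_mul_eq_smul (Bialgebra.counitAlgHom k H)
  obtain ⟨y, hy1, hy⟩ := exists_mul_eq_smul (A := Hᵐᵒᵖ)
    ((AlgEquiv.toOpposite k k).symm.toAlgHom.comp (Bialgebra.counitAlgHom k H).op)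
  simp only [Bialgebra.counitAlgHom_apply] at hx1 hx
  have hy1' : counit (R := k) y.unop = 1 := by simpa using hy1
  have hy' (h : H) : y.unop * h = counit (R := k) h • y.unop := by
    simpa using congrArg MulOpposite.unop (hy (MulOpposite.op h))
  have hxy : x = y.unop := by
    simpa [hx1, hy1', hy'] using (hx y.unop).symm
  exact ⟨x, hx1, hx, fun h => hxy ▸ hy' h⟩

variable (k H) in
/-- The idempotent integral `Λ` of a semisimple Hopf algebra `H`. -/
def integral : H := (exists_integral k H).choose

@[simp]
lemma counit_integral : counit (R := k) (integral k H) = 1 :=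
  (exists_integral k H).choose_spec.1

lemma mul_integral (h : H) : h * integral k H = counit (R := k) h • integral k H :=
  (exists_integral k H).choose_spec.2.1 h

lemma integral_mul (h : H) : integral k H * h = counit (R := k) h • integral k H :=
  (exists_integral k H).choose_spec.2.2 h

lemma comul_integral_mul_tmul_one (h : H) :
    comul (integral k H) * (h ⊗ₜ[k] 1) = comul (integral k H) * (1 ⊗ₜ antipode k h) :=
  comul_mul_tmul_one (ℛ k h) fun _ _ => integral_mul _

lemma one_tmul_mul_comul_integral (h : H) :
    (1 ⊗ₜ[k] h) * comul (integral k H) = (antipode k h ⊗ₜ 1) * comul (integral k H) :=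
  (antipode_tmul_one_mul_comul (ℛ k h) fun _ _ => by rw [mul_integral, counit_antipode]).symm

lemma evalFst_comp_mulRight_integral (f : Module.Dual k H) (h : H) :
    evalFst (f ∘ₗ mulRight k h) (integral k H) = evalFst f (integral k H) * antipode k h := by
  have hcomul := congrArg ((TensorProduct.lid k H).toLinearMap ∘ₗ f.rTensor H)
    (comul_integral_mul_tmul_one (k := k) h)
  rw [evalFst_eq_sum _ (ℛ k (integral k H)), evalFst_eq_sum _ (ℛ k (integral k H))]
  simpa [← (ℛ k (integral k H)).eq, Finset.sum_mul] using hcomul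

lemma evalFst_comp_mulLeft_antipode_integral (f : Module.Dual k H) (h : H) :
    evalFst (f ∘ₗ mulLeft k (antipode k h)) (integral k H) = h * evalFst f (integral k H) := by
  have hcomul := congrArg ((TensorProduct.lid k H).toLinearMap ∘ₗ f.rTensor H)
    (one_tmul_mul_comul_integral (k := k) h)
  rw [evalFst_eq_sum _ (ℛ k (integral k H)), evalFst_eq_sum _ (ℛ k (integral k H))]
  simpa [← (ℛ k (integral k H)).eq, Finset.mul_sum] using hcomul.symm

lemma evalSnd_comp_mulRight_antipode_integral (f : Module.Dual k H) (h : H) :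
    evalSnd (f ∘ₗ mulRight k (antipode k h)) (integral k H) = evalSnd f (integral k H) * h :=
  evalSnd_comp_mulRight_antipode f (ℛ k h) fun _ _ => integral_mul _

lemma evalSnd_comp_mulLeft_integral (f : Module.Dual k H) (h : H) :
    evalSnd (f ∘ₗ mulLeft k h) (integral k H) = antipode k h * evalSnd f (integral k H) := by
  have hcomul := congrArg ((TensorProduct.rid k H).toLinearMap ∘ₗ f.lTensor H)
    (one_tmul_mul_comul_integral (k := k) h)
  rw [evalSnd_eq_sum _ (ℛ k (integral k H)), evalSnd_eq_sum _ (ℛ k (integral k H))]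
  simpa [← (ℛ k (integral k H)).eq, Finset.mul_sum] using hcomul

variable [FiniteDimensional k H]

lemma surjective_evalFst_integral :
    Function.Surjective (evalFst.flip (integral k H) : Module.Dual k H →ₗ[k] H) := by
  let J : Submodule k H := range (evalFst.flip (integral k H))
  have hmul (h x : H) (hx : x ∈ J) : h * x ∈ J := by
    obtain ⟨f, rfl⟩ := hx
    exact ⟨f ∘ₗ mulLeft k (antipode k h), evalFst_comp_mulLeft_antipode_integral f h⟩
  have hone : (1 : H) ∈ J := by
    have hsum := sum_antipode_mul_eq_smul (basisRepr (Module.finBasis k H) (integral k H))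
    rw [counit_integral, one_smul] at hsum
    exact hsum ▸ J.sum_mem fun i _ => hmul _ _ ⟨_, rfl⟩
  exact fun x => mul_one x ▸ hmul x 1 hone

lemma injective_evalFst_integral :
    Function.Injective (evalFst.flip (integral k H) : Module.Dual k H →ₗ[k] H) :=
  (injective_iff_surjective_of_finrank_eq_finrank Subspace.dual_finrank_eq).2
    surjective_evalFst_integral

lemma dual_ext_integral {f g : Module.Dual k H}
    (hfg : evalFst f (integral k H) = evalFst g (integral k H)) : f = g :=
  injective_evalFst_integral hfg

variable (k H) in
/-- The integral `λ` of the dual Hopf algebra, normalized by `λ(Λ) = 1`; it is the functional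
with `∑ λ(Λ₁) Λ₂ = 1`. -/
def cointegral : Module.Dual k H := (surjective_evalFst_integral (k := k) (1 : H)).choose

@[simp]
lemma evalFst_cointegral_integral : evalFst (cointegral k H) (integral k H) = 1 :=
  (surjective_evalFst_integral (1 : H)).choose_spec

@[simp]
lemma cointegral_integral : cointegral k H (integral k H) = 1 := by
  rw [← counit_evalFst, evalFst_cointegral_integral, Bialgebra.counit_one]

lemma evalFst_cointegral (h : H) : evalFst (cointegral k H) h = cointegral k H h • 1 := by
  refine sub_eq_zero.1 ((Module.forall_dual_apply_eq_zero_iff k _).1 fun f => ?_)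
  have hf : f ∘ₗ evalFst (cointegral k H) = f 1 • cointegral k H := by
    refine dual_ext_integral ?_
    rw [← evalFst_evalFst, evalFst_cointegral_integral, map_smul, LinearMap.smul_apply,
      evalFst_cointegral_integral, evalFst_one]
  simpa [sub_eq_zero, mul_comm] using congr($hf h)

lemma eq_smul_cointegral {f : Module.Dual k H}
    (hf : evalFst f (integral k H) = f (integral k H) • 1) :
    f = f (integral k H) • cointegral k H :=
  dual_ext_integral (by simpa using hf)

lemma antipode_injective : Function.Injective (antipode k : H →ₗ[k] H) := by
  refine (injective_iff_map_eq_zero _).2 fun h hh => ?_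
  have hmul := evalFst_comp_mulLeft_antipode_integral (cointegral k H) h
  simpa [hh] using hmul.symm

lemma cointegral_mul (x h : H) :
    cointegral k H (x * h) = cointegral k H (antipode k (antipode k h) * x) := by
  have hcomp : cointegral k H ∘ₗ mulRight k h =
      cointegral k H ∘ₗ mulLeft k (antipode k (antipode k h)) := by
    refine dual_ext_integral ?_
    rw [evalFst_comp_mulRight_integral, evalFst_comp_mulLeft_antipode_integral,
      evalFst_cointegral_integral, one_mul, mul_one]
  exact congr($hcomp x)

lemma cointegral_antipode_evalFst_mul (f : Module.Dual k H) (x : H) :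
    cointegral k H (antipode k (evalFst f (integral k H)) * x) = f x := by
  have hcomp : cointegral k H ∘ₗ mulLeft k (antipode k (evalFst f (integral k H))) = f := by
    refine dual_ext_integral ?_
    rw [evalFst_comp_mulLeft_antipode_integral, evalFst_cointegral_integral, mul_one]
  exact congr($hcomp x)

lemma antipode_surjective : Function.Surjective (antipode k : H →ₗ[k] H) :=
  surjective_of_injective antipode_injective

lemma eq_zero_of_cointegral_mul_eq_zero {x : H} (hx : ∀ y, cointegral k H (x * y) = 0) :
    x = 0 :=
  (Module.forall_dual_apply_eq_zero_iff k x).1 fun f => by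
    obtain ⟨y, hy⟩ := antipode_surjective (k := k) (evalFst f (integral k H))
    rw [← cointegral_antipode_evalFst_mul, ← hy, ← cointegral_mul, hx]

lemma trace_eq_cointegral (T : Module.End k H) :
    trace k H T = cointegral k H (mul' k H (TensorProduct.map (antipode k) T
      (TensorProduct.comm k H H (comul (integral k H))))) := by
  let b := Module.finBasis k H
  rw [trace_eq_sum_basis T b, ← (basisRepr b (integral k H)).eq]
  simp [basisRepr, cointegral_antipode_evalFst_mul]

lemma trace_antipode_antipode :
    trace k H (antipode k ∘ₗ antipode k) = cointegral k H 1 := by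
  let r := ℛ k (integral k H)
  have hsum := sum_antipode_mul_eq_smul r
  have hanti := congrArg (antipode k) hsum
  rw [trace_eq_cointegral, ← r.eq]
  simpa [antipode_mul_antidistrib] using congrArg (cointegral k H) hanti

end Integral

section DistinguishedGroupLike

open Coalgebra HopfAlgebra LinearMap

variable {k H : Type*} [Field k] [Ring H] [HopfAlgebra k H]

lemma isGroupLikeElem_of_evalFst_eq_smul [FiniteDimensional k H] {x : H}
    (hx : counit (R := k) x = 1) (hfst : ∀ f : Module.Dual k H, evalFst f x = f x • x) :
    IsGroupLikeElem k x where
  counit_eq_one := hx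
  comul_eq_tmul_self := by
    let b := Module.finBasis k H
    rw [← (basisRepr b x).eq]
    simp_rw [basisRepr, hfst, ← TensorProduct.smul_tmul, ← TensorProduct.sum_tmul]
    exact congrArg (· ⊗ₜ[k] x) (b.sum_repr x)

lemma exists_pow_eq_one_of_isGroupLikeElem [FiniteDimensional k H] {x : H}
    (hx : IsGroupLikeElem k x) : ∃ n, 0 < n ∧ x ^ n = 1 := by
  have : Finite (GroupLike k H) := (linearIndep_groupLikeVal (R := k) (A := H)).finite
  obtain ⟨n, hn, hpow⟩ := (isOfFinOrder_of_finite (⟨x, hx⟩ : GroupLike k H)).exists_pow_eq_one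
  exact ⟨n, hn, congrArg GroupLike.val hpow⟩

variable [IsSemisimpleRing H] [FiniteDimensional k H]

variable (k H) in
/-- The distinguished grouplike element `∑ λ(Λ₂) Λ₁` of `H`, which measures the failure of the
cointegral `λ` to be invariant on both sides. -/
def distinguished : H := evalSnd (cointegral k H) (integral k H)

lemma evalSnd_cointegral (h : H) :
    evalSnd (cointegral k H) h = cointegral k H h • distinguished k H := by
  refine sub_eq_zero.1 ((Module.forall_dual_apply_eq_zero_iff k _).1 fun f => ?_)
  have hf := eq_smul_cointegral (f := cointegral k H ∘ₗ evalFst f) (by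
    rw [← evalFst_evalFst, evalFst_cointegral, comp_apply])
  have hfh : cointegral k H (evalFst f h) =
      cointegral k H (evalFst f (integral k H)) * cointegral k H h := congr($hf h)
  rw [map_sub, sub_eq_zero, ← apply_evalFst, hfh, map_smul, distinguished, ← apply_evalFst,
    smul_eq_mul, mul_comm]

lemma isGroupLikeElem_distinguished : IsGroupLikeElem k (distinguished k H) := by
  refine isGroupLikeElem_of_evalFst_eq_smul ?_ fun f => ?_
  · rw [distinguished, counit_evalSnd, cointegral_integral]
  · rw [distinguished, evalFst_evalSnd, evalSnd_cointegral, apply_evalFst, distinguished]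

lemma distinguished_mul (h : H) :
    distinguished k H * h =
      antipode k (antipode k (antipode k (antipode k h))) * distinguished k H := by
  rw [distinguished, ← evalSnd_comp_mulRight_antipode_integral, ← evalSnd_comp_mulLeft_integral]
  congr 2
  ext x
  exact cointegral_mul x (antipode k h)

lemma exists_antipode_comp_antipode_pow_eq_one :
    ∃ n, 0 < n ∧ (antipode k ∘ₗ antipode k : Module.End k H) ^ n = 1 := by
  obtain ⟨n, hn, hpow⟩ := exists_pow_eq_one_of_isGroupLikeElem
    (isGroupLikeElem_distinguished (k := k) (H := H))
  have hconj (m : ℕ) (h : H) : distinguished k H ^ m * h =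
      ((antipode k ∘ₗ antipode k : Module.End k H) ^ (2 * m)) h * distinguished k H ^ m := by
    induction m generalizing h with
    | zero => simp
    | succ m ih =>
      rw [pow_succ, mul_assoc, distinguished_mul, ← mul_assoc, ih, mul_assoc, mul_add, pow_add]
      rfl
  refine ⟨2 * n, by positivity, LinearMap.ext fun h => ?_⟩
  simpa [hpow] using (hconj n h).symm

lemma distinguished_eq_one (hone : cointegral k H 1 ≠ 0) : distinguished k H = 1 := by
  have hsnd := evalSnd_cointegral (k := k) (1 : H)
  rw [evalSnd_one] at hsnd
  exact (smul_right_injective H hone hsnd).symm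

end DistinguishedGroupLike

section RootsOfUnity

open Polynomial Module

variable {k : Type*} [Field k] [CharZero k]

lemma nonempty_algebraicClosure_rat_ringHom_complex : Nonempty (algebraicClosure ℚ k →+* ℂ) := by
  have : Algebra.IsAlgebraic ℚ (algebraicClosure ℚ k) := by
    convert algebraicClosure.isAlgebraic ℚ k
    · rfl
    · exact Subsingleton.elim _ _
  exact ⟨(IsAlgClosed.lift : algebraicClosure ℚ k →ₐ[ℚ] ℂ).toRingHom⟩

variable [IsAlgClosed k]

lemma exists_basis_apply_eq_smul {V : Type*} [AddCommGroup V] [Module k V] [FiniteDimensional k V]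
    {f : End k V} {N : ℕ} (hN : N ≠ 0) (hf : f ^ N = 1) :
    ∃ (b : Basis (Fin (finrank k V)) k V) (μ : Fin (finrank k V) → k),
      (∀ i, f (b i) = μ i • b i) ∧ ∀ i, μ i ^ N = 1 := by
  classical
  have hsq : Squarefree (X ^ N - 1 : k[X]) :=
    (X_pow_sub_one_separable_iff.2 (Nat.cast_ne_zero.2 hN)).squarefree
  have hss : f.IsSemisimple :=
    End.isSemisimple_of_squarefree_aeval_eq_zero hsq (by simp [hf])
  have hint : DirectSum.IsInternal f.eigenspace :=
    DirectSum.isInternal_submodule_of_iSupIndep_of_iSup_eq_top f.eigenspaces_iSupIndep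
      hss.iSup_eigenspace_eq_top
  let c := hint.collectedBasis fun μ => finBasis k (f.eigenspace μ)
  have := FiniteDimensional.fintypeBasisIndex c
  let e := Fintype.equivFinOfCardEq (finrank_eq_card_basis c).symm
  let b := c.reindex e
  have hb (i) : f (b i) = (e.symm i).1 • b i := by
    rw [c.reindex_apply]
    exact End.mem_eigenspace_iff.1 (hint.collectedBasis_mem _ _)
  refine ⟨b, fun i => (e.symm i).1, hb, fun i => ?_⟩
  have hpow (m : ℕ) : (f ^ m) (b i) = (e.symm i).1 ^ m • b i := by
    induction m with
    | zero => simp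
    | succ m ih => rw [pow_succ', Module.End.mul_apply, ih, map_smul, hb, smul_smul, ← pow_succ]
  exact smul_left_injective k (b.ne_zero i) (by simp [← hpow, hf])

/-- Traces of endomorphisms of finite order lie in the field of algebraic numbers of `k`, where
an embedding `ψ` into `ℂ` gives complex conjugation a meaning. -/
lemma exists_trace_eq_conj {V : Type*} [AddCommGroup V] [Module k V] [FiniteDimensional k V]
    (ψ : algebraicClosure ℚ k →+* ℂ) {f g : End k V} (hfg : g * f = 1) {N : ℕ} (hN : N ≠ 0)
    (hf : f ^ N = 1) :
    ∃ a b : algebraicClosure ℚ k, (a : k) = LinearMap.trace k V f ∧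
      (b : k) = LinearMap.trace k V g ∧ ψ b = starRingEnd ℂ (ψ a) := by
  obtain ⟨b, μ, hb, hμ⟩ := exists_basis_apply_eq_smul hN hf
  have hμ0 (i) : μ i ≠ 0 := fun h => by simpa [h, hN] using hμ i
  have hg (i) : g (b i) = (μ i)⁻¹ • b i := by
    rw [eq_inv_smul_iff₀ (hμ0 i), ← map_smul, ← hb, ← Module.End.mul_apply, hfg,
      Module.End.one_apply]
  have hmem (i) : μ i ∈ algebraicClosure ℚ k :=
    mem_algebraicClosure_iff.2 ⟨X ^ N - 1, X_pow_sub_C_ne_zero (Nat.pos_of_ne_zero hN) 1,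
      by simp [hμ]⟩
  let ν (i) : algebraicClosure ℚ k := ⟨μ i, hmem i⟩
  have hν (i) : ψ (ν i) ^ N = 1 := by
    rw [← map_pow, ← map_one ψ]
    exact congrArg ψ (Subtype.ext (hμ i))
  refine ⟨∑ i, ν i, ∑ i, (ν i)⁻¹, ?_, ?_, ?_⟩
  · rw [trace_eq_sum_basis f b]
    simp [hb, ν]
  · rw [trace_eq_sum_basis g b]
    simp [hg, ν]
  · simp only [map_sum, map_inv₀]
    exact Finset.sum_congr rfl fun i _ =>
      Complex.inv_eq_conj (Complex.norm_eq_one_of_pow_eq_one (hν i) hN)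

lemma exists_trace_mul_trace_eq {n : Type*} [Fintype n] [DecidableEq n]
    (ψ : algebraicClosure ℚ k →+* ℂ) {u v : Matrix n n k} (hvu : v * u = 1) {N : ℕ} (hN : N ≠ 0)
    {c : k} (hu : u ^ N = c • 1) :
    ∃ (t : algebraicClosure ℚ k) (a : ℂ), (t : k) = u.trace * v.trace ∧
      ψ t = Complex.normSq a ∧ (u.trace ≠ 0 → a ≠ 0) := by
  cases isEmpty_or_nonempty n
  · exact ⟨0, 0, by simp [Matrix.trace]⟩
  obtain ⟨r, hr⟩ := IsAlgClosed.exists_pow_nat_eq c (Nat.pos_of_ne_zero hN)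
  have hr0 : r ≠ 0 := by
    rintro rfl
    have hpow : v ^ N * u ^ N = 1 := by
      rw [← (Commute.mul_pow (show Commute v u from hvu.trans (mul_eq_one_comm.1 hvu).symm)), hvu,
        one_pow]
    simp [hu, ← hr, hN] at hpow
  obtain ⟨a, b, ha, hb, hab⟩ := exists_trace_eq_conj ψ (f := Matrix.toLinAlgEquiv' (r⁻¹ • u))
    (g := Matrix.toLinAlgEquiv' (r • v)) (by rw [← map_mul]; simp [hvu, hr0]) hN
    (by rw [← map_pow, _root_.smul_pow, hu, smul_smul, ← hr, ← mul_pow]; simp [hr0])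
  have ha' : (a : k) = r⁻¹ * u.trace := ha.trans ((Matrix.trace_toLin'_eq _).trans (by simp))
  have hb' : (b : k) = r * v.trace := hb.trans ((Matrix.trace_toLin'_eq _).trans (by simp))
  refine ⟨a * b, ψ a, ?_, ?_, fun htr => ?_⟩
  · rw [MulMemClass.coe_mul, ha', hb', mul_mul_mul_comm, inv_mul_cancel₀ hr0, one_mul]
  · rw [map_mul, hab, Complex.mul_conj]
  · rw [Ne, map_eq_zero, ← ZeroMemClass.coe_eq_zero, ha']
    exact mul_ne_zero (inv_ne_zero hr0) htr

end RootsOfUnity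

section SemisimpleTrace

open Matrix

variable {k : Type*} [Field k]

lemma exists_eq_sum_trace_mul {ι : Type*} [Fintype ι] {d : ι → Type*} [∀ i, Fintype (d i)]
    (f : Module.Dual k (Π i, Matrix (d i) (d i) k)) :
    ∃ u : Π i, Matrix (d i) (d i) k, ∀ x, f x = ∑ i, (u i * x i).trace := by
  classical
  refine ⟨fun i => Matrix.of fun a b => f (Pi.single i (Matrix.single b a 1)), fun x => ?_⟩
  have hx : x = ∑ i, ∑ a, ∑ b, x i a b • Pi.single i (Matrix.single a b 1) := by
    conv_lhs => rw [← Finset.univ_sum_single x]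
    refine Finset.sum_congr rfl fun i _ => ?_
    conv_lhs => rw [Matrix.matrix_eq_sum_single (x i)]
    rw [← LinearMap.coe_single (R := k)]
    simp only [map_sum, ← map_smul, Matrix.smul_single, smul_eq_mul, mul_one]
  conv_lhs => rw [hx]
  simp only [map_sum, map_smul, smul_eq_mul, Matrix.trace, Matrix.diag, Matrix.mul_apply,
    Matrix.of_apply]
  refine Finset.sum_congr rfl fun i _ => ?_
  rw [Finset.sum_comm]
  simp only [mul_comm]

lemma trace_mulLeftRight_pi {ι : Type*} [Fintype ι] {d : ι → Type*} [∀ i, Fintype (d i)]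
    (u v : Π i, Matrix (d i) (d i) k) :
    LinearMap.trace k _ (LinearMap.mulLeftRight k (v, u)) = ∑ i, (u i).trace * (v i).trace := by
  classical
  rw [trace_eq_sum_basis _ (Pi.basis fun i => Matrix.stdBasis k (d i) (d i)), Fintype.sum_sigma]
  refine Finset.sum_congr rfl fun i _ => ?_
  rw [Fintype.sum_prod_type, Matrix.trace, Matrix.trace, Finset.sum_mul_sum, Finset.sum_comm]
  refine Finset.sum_congr rfl fun a _ => Finset.sum_congr rfl fun b _ => ?_
  have hcoord (m : Matrix (d i) (d i) k) :
      (Matrix.stdBasis k (d i) (d i)).repr m (b, a) = m b a := by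
    simp [Matrix.stdBasis]
  simp [hcoord, Matrix.stdBasis_eq_single, Matrix.mul_apply, Matrix.single_apply, ite_and,
    mul_comm]

lemma exists_apply_eq_smul_one {ι : Type*} {d : ι → Type*} [∀ i, Fintype (d i)]
    [∀ i, DecidableEq (d i)] {z : Π i, Matrix (d i) (d i) k} (hz : ∀ x, x * z = z * x) (i : ι) :
    ∃ c : k, z i = c • 1 := by
  classical
  have hscalar : z i ∈ Set.range (Matrix.scalar (d i)) :=
    Matrix.mem_range_scalar_iff_commute_single'.2 fun a b => by
      simpa [Commute, SemiconjBy] using congrFun (hz (Pi.single i (Matrix.single a b 1))) i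
  obtain ⟨c, hc⟩ := hscalar
  exact ⟨c, by rw [← hc, Matrix.scalar_apply, Matrix.smul_one_eq_diagonal]⟩

lemma exists_nakayama_eq {ι : Type*} [Fintype ι] {d : ι → Type*} [∀ i, Fintype (d i)]
    [∀ i, DecidableEq (d i)] {f : Module.Dual k (Π i, Matrix (d i) (d i) k)}
    {ν : Module.End k (Π i, Matrix (d i) (d i) k)} (hf : ∀ x, (∀ y, f (x * y) = 0) → x = 0)
    (hν : ∀ x y, f (x * y) = f (ν y * x)) :
    ∃ u v : Π i, Matrix (d i) (d i) k, v * u = 1 ∧ (∀ x, f x = ∑ i, (u i * x i).trace) ∧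
      ∀ y, ν y = v * y * u := by
  obtain ⟨u, hu⟩ := exists_eq_sum_trace_mul f
  have hreg : IsLeftRegular u := isLeftRegular_iff_right_eq_zero_of_mul.2 fun w hw =>
    hf w fun y => by
      rw [hu]
      exact Finset.sum_eq_zero fun i _ => by
        rw [Pi.mul_apply, ← mul_assoc, ← Pi.mul_apply, hw]
        simp
  have : IsArtinianRing (Π i, Matrix (d i) (d i) k)ᵐᵒᵖ := IsArtinianRing.of_finite k _
  obtain ⟨v, huv, hvu⟩ := isUnit_iff_exists.1 (IsArtinianRing.isUnit_iff_isLeftRegular.2 hreg)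
  refine ⟨u, v, hvu, hu, fun y => sub_eq_zero.1 (hf _ fun x => ?_)⟩
  rw [sub_mul, map_sub, ← hν, sub_eq_zero, hu, hu]
  refine Finset.sum_congr rfl fun i _ => ?_
  have huvi : u i * v i = 1 := congrFun huv i
  simp only [Pi.mul_apply]
  rw [← mul_assoc, Matrix.trace_mul_comm, mul_assoc, mul_assoc, ← mul_assoc (u i) (v i),
    huvi, one_mul]

lemma pow_mul_pow_apply {A : Type*} [Ring A] [Algebra k A] {ν : Module.End k A} {u v : A}
    (huv : u * v = 1) (hν : ∀ y, ν y = v * y * u) (m : ℕ) (y : A) :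
    u ^ m * (ν ^ m) y = y * u ^ m := by
  induction m generalizing y with
  | zero => simp
  | succ m ih =>
    rw [pow_succ, pow_succ', Module.End.mul_apply, hν, mul_assoc, mul_assoc v, ← mul_assoc u,
      huv, one_mul, ← mul_assoc, ih, mul_assoc]

/-- Here `f` is the form of a Frobenius algebra with Nakayama automorphism `ν`. -/
lemma trace_ne_zero_of_pi [CharZero k] [IsAlgClosed k] {ι : Type*} [Finite ι] {d : ι → Type*}
    [∀ i, Fintype (d i)] {f : Module.Dual k (Π i, Matrix (d i) (d i) k)}
    {ν : Module.End k (Π i, Matrix (d i) (d i) k)} (hf : ∀ x, (∀ y, f (x * y) = 0) → x = 0)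
    (hν : ∀ x y, f (x * y) = f (ν y * x)) {N : ℕ} (hN : N ≠ 0) (hνN : ν ^ N = 1)
    {z : Π i, Matrix (d i) (d i) k} (hz : ∀ x, x * z = z * x) (hfz : f z ≠ 0) :
    LinearMap.trace k _ ν ≠ 0 := by
  classical
  cases nonempty_fintype ι
  obtain ⟨u, v, hvu, hu, hνu⟩ := exists_nakayama_eq hf hν
  have hνuv : ν = LinearMap.mulLeftRight k (v, u) := LinearMap.ext hνu
  choose c hc using exists_apply_eq_smul_one (z := u ^ N) fun x => by
    rw [← pow_mul_pow_apply (mul_eq_one_comm.1 hvu) hνu, hνN, Module.End.one_apply]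
  choose e he using exists_apply_eq_smul_one hz
  obtain ⟨ψ⟩ := nonempty_algebraicClosure_rat_ringHom_complex (k := k)
  choose t a ht hta ha using fun i =>
    exists_trace_mul_trace_eq ψ (congrFun hvu i) hN (hc i)
  obtain ⟨i, -, hi⟩ : ∃ i ∈ Finset.univ, (u i * z i).trace ≠ 0 :=
    Finset.exists_ne_zero_of_sum_ne_zero (hu z ▸ hfz)
  have hui : (u i).trace ≠ 0 := fun h => hi (by simp [he, h])
  have hpos : 0 < ∑ i, Complex.normSq (a i) :=
    Finset.sum_pos' (fun i _ => Complex.normSq_nonneg _)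
      ⟨i, Finset.mem_univ i, Complex.normSq_pos.2 (ha i hui)⟩
  have htr : LinearMap.trace k _ ν = (∑ i, t i : algebraicClosure ℚ k) := by
    rw [hνuv, trace_mulLeftRight_pi]
    push_cast
    exact Finset.sum_congr rfl fun i _ => (ht i).symm
  have hψ : ψ (∑ i, t i) = ((∑ i, Complex.normSq (a i) : ℝ) : ℂ) := by
    rw [map_sum, Complex.ofReal_sum]
    exact Finset.sum_congr rfl fun i _ => hta i
  intro h
  rw [htr, ZeroMemClass.coe_eq_zero] at h
  rw [h, map_zero] at hψ
  exact hpos.ne (Complex.ofReal_injective (by simpa using hψ))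

lemma trace_ne_zero_of_isSemisimpleRing [CharZero k] [IsAlgClosed k] {A : Type*} [Ring A]
    [Algebra k A] [FiniteDimensional k A] [IsSemisimpleRing A] {f : Module.Dual k A}
    {ν : Module.End k A} (hf : ∀ x, (∀ y, f (x * y) = 0) → x = 0)
    (hν : ∀ x y, f (x * y) = f (ν y * x)) {N : ℕ} (hN : N ≠ 0) (hνN : ν ^ N = 1) {z : A}
    (hz : ∀ x, x * z = z * x) (hfz : f z ≠ 0) : LinearMap.trace k A ν ≠ 0 := by
  obtain ⟨n, d, -, ⟨φ⟩⟩ := IsSemisimpleRing.exists_algEquiv_pi_matrix_of_isAlgClosed k A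
  rw [← LinearMap.trace_conj' ν φ.toLinearEquiv]
  refine trace_ne_zero_of_pi (f := f ∘ₗ φ.symm.toLinearMap) (fun x hx => ?_) (fun x y => ?_) hN ?_
    (z := φ z) (fun x => ?_) (by simpa using hfz)
  · refine φ.symm.injective ((hf _ fun y => ?_).trans (map_zero _).symm)
    simpa using hx (φ y)
  · simpa [LinearEquiv.conj_apply] using hν (φ.symm x) (φ.symm y)
  · exact (map_pow φ.toLinearEquiv.conjRingEquiv ν N).symm.trans (by rw [hνN, map_one])
  · rw [← φ.apply_symm_apply x, ← map_mul, ← map_mul, hz]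

end SemisimpleTrace

section AntipodeSquare

open Coalgebra HopfAlgebra LinearMap

section Trace

variable {k V : Type*} [Field k] [AddCommGroup V] [Module k V]

lemma isIdempotentElem_inv_two_smul_one_add [CharZero k] {T : Module.End k V} (hT : T * T = 1) :
    IsIdempotentElem ((2 : k)⁻¹ • (1 + T)) := by
  rw [IsIdempotentElem, smul_mul_smul_comm, mul_add, add_mul, add_mul, hT, one_mul, mul_one,
    one_mul]
  module

variable [FiniteDimensional k V]

lemma trace_eq_finrank_range {P : Module.End k V} (hP : IsIdempotentElem P) :
    trace k V P = Module.finrank k (range P) :=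
  hP.isProj_range.trace

lemma eq_one_or_neg_one_of_trace_eq [CharZero k] {T : Module.End k V} (hT : T * T = 1) {m : ℤ}
    (hm : m ≠ 0) (htr : trace k V T = Module.finrank k V * m) : T = 1 ∨ T = -1 := by
  let P : Module.End k V := (2 : k)⁻¹ • (1 + T)
  have hP : IsIdempotentElem P := isIdempotentElem_inv_two_smul_one_add hT
  have htwo : (2 : k) • P = 1 + T := by simp [P, smul_smul]
  have hrank : (Module.finrank k V : ℤ) + Module.finrank k V * m
      = 2 * Module.finrank k (range P) := by
    have h := congrArg (trace k V) htwo
    rw [map_smul, map_add, trace_one, htr, trace_eq_finrank_range hP, smul_eq_mul] at h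
    exact_mod_cast h.symm
  have hle : Module.finrank k (range P) ≤ Module.finrank k V := Submodule.finrank_le _
  rcases hm.lt_or_gt with hneg | hpos
  · right
    have hzero : Module.finrank k (range P) = 0 := by nlinarith
    rw [Submodule.finrank_eq_zero, range_eq_bot] at hzero
    rw [hzero, smul_zero] at htwo
    exact (neg_eq_of_add_eq_zero_right htwo.symm).symm
  · left
    have hfull : Module.finrank k (range P) = Module.finrank k V := by nlinarith
    have hone : P = 1 := LinearMap.ext fun x => by
      obtain ⟨y, rfl⟩ := range_eq_top.1 (Submodule.eq_top_of_finrank_eq hfull) x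
      exact congr($hP y)
    rw [hone, two_smul] at htwo
    exact (add_left_cancel htwo).symm

lemma exists_trace_mul_eq_intCast [CharZero k] {T P : Module.End k V} (hT : T * T = 1)
    (hP : IsIdempotentElem P) (hTP : Commute T P) : ∃ m : ℤ, trace k V (T * P) = m := by
  have hQ : IsIdempotentElem ((2 : k)⁻¹ • (1 + T)) := isIdempotentElem_inv_two_smul_one_add hT
  have hQP := hQ.mul_of_commute (((Commute.one_left P).add_left hTP).smul_left _) hP
  refine ⟨2 * Module.finrank k (range (((2 : k)⁻¹ • (1 + T)) * P)) - Module.finrank k (range P), ?_⟩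
  push_cast
  rw [← trace_eq_finrank_range hP, ← trace_eq_finrank_range hQP]
  simp only [smul_mul_assoc, add_mul, one_mul, map_smul, map_add, smul_eq_mul]
  ring

end Trace

variable {k H : Type*} [Field k] [Ring H] [HopfAlgebra k H]

lemma evalFst_antipode (f : Module.Dual k H) (x : H) :
    evalFst f (antipode k x) = antipode k (evalSnd (f ∘ₗ antipode k) x) := by
  rw [evalFst_apply, comul_antipode, evalSnd_eq_sum _ (ℛ k x), ← (ℛ k x).eq]
  simp

lemma evalSnd_antipode (f : Module.Dual k H) (x : H) :
    evalSnd f (antipode k x) = antipode k (evalFst (f ∘ₗ antipode k) x) := by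
  rw [evalSnd_apply, comul_antipode, evalFst_eq_sum _ (ℛ k x), ← (ℛ k x).eq]
  simp

variable (k H) in
/-- The Galois map `x ⊗ y ↦ x₁ ⊗ x₂ y`, which carries `H` tensored with a trivial module to `H ⊗ H`
with its diagonal action. -/
def galois : Module.End k (H ⊗[k] H) :=
  mul' k (H ⊗[k] H) ∘ₗ TensorProduct.map comul (TensorProduct.mk k H H 1)

lemma galois_tmul (x y : H) : galois k H (x ⊗ₜ y) = comul x * 1 ⊗ₜ y := rfl

lemma galois_surjective : Function.Surjective (galois k H) := by
  refine range_eq_top.1 (eq_top_iff.2 fun z _ => ?_)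
  induction z with
  | zero => exact zero_mem _
  | add z w hz hw => exact add_mem (hz trivial) (hw trivial)
  | tmul x y =>
    have hxy : x ⊗ₜ[k] y = (x ⊗ₜ 1) * (1 ⊗ₜ y) := by simp
    rw [hxy, tmul_one_eq_sum (ℛ k x), Finset.sum_mul]
    refine sum_mem fun i _ => ⟨(ℛ k x).left i ⊗ₜ (antipode k ((ℛ k x).right i) * y), ?_⟩
    rw [galois_tmul, mul_assoc]
    simp

variable (k H) in
/-- The character of the regular representation of `H`. -/
def regularCharacter : Module.Dual k H := trace k H ∘ₗ LinearMap.mul k H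

variable [FiniteDimensional k H]

lemma galois_injective : Function.Injective (galois k H) :=
  LinearMap.injective_iff_surjective.2 galois_surjective

lemma trace_mulLeft_tensorProduct (z : H ⊗[k] H) : trace k _ (mulLeft k z) =
    mul' k k (TensorProduct.map (regularCharacter k H) (regularCharacter k H) z) := by
  induction z with
  | zero => simp
  | add z w hz hw =>
    rw [map_add, map_add, ← hz, ← hw, ← map_add]
    congr 1
    ext
    simp [add_mul]
  | tmul x y =>
    have hmap : mulLeft k (x ⊗ₜ[k] y) = TensorProduct.map (mulLeft k x) (mulLeft k y) := by
      ext
      simp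
    rw [hmap, trace_tensorProduct']
    rfl

lemma regularCharacter_comp_evalFst : regularCharacter k H ∘ₗ evalFst (regularCharacter k H) =
    (Module.finrank k H : k) • regularCharacter k H := by
  ext h
  have hbij : Function.Bijective (galois k H) := ⟨galois_injective, galois_surjective⟩
  let e := LinearEquiv.ofBijective (galois k H) hbij
  have hcomm : galois k H ∘ₗ TensorProduct.map (mulLeft k h) 1 =
      mulLeft k (comul (R := k) h) ∘ₗ galois k H := by
    ext x y
    simp [galois_tmul, mul_assoc]
  have hconj : e.conj (TensorProduct.map (mulLeft k h) 1) = mulLeft k (comul (R := k) h) := by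
    refine LinearMap.ext fun z => ?_
    obtain ⟨w, rfl⟩ := e.surjective z
    simpa [e, LinearEquiv.conj_apply] using congr($hcomm w)
  calc regularCharacter k H (evalFst (regularCharacter k H) h)
      = mul' k k (TensorProduct.map (regularCharacter k H) (regularCharacter k H) (comul h)) := by
        rw [evalFst_eq_sum _ (ℛ k h), ← (ℛ k h).eq]
        simp
    _ = trace k _ (TensorProduct.map (mulLeft k h) (1 : Module.End k H)) := by
        rw [← trace_mulLeft_tensorProduct, ← hconj, trace_conj']
    _ = Module.finrank k H * regularCharacter k H h := by
        rw [trace_tensorProduct', trace_one, mul_comm]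
        rfl

variable [IsSemisimpleRing H]

lemma trace_comp_evalFst (T : Module.End k H) (f : Module.Dual k H) {ι : Type*}
    (r : Repr k (evalFst f (integral k H)) ι) : trace k H (T ∘ₗ evalFst f) =
      ∑ i ∈ r.index, cointegral k H (antipode k (r.right i) * T (r.left i)) := by
  have hcomul : TensorProduct.map (antipode k) (T ∘ₗ evalFst f)
      (TensorProduct.comm k H H (comul (integral k H))) =
        TensorProduct.map (antipode k) T (TensorProduct.comm k H H
          (comul (evalFst f (integral k H)))) := by
    rw [comul_evalFst, ← (ℛ k (integral k H)).eq]
    simp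
  rw [trace_eq_cointegral, hcomul, ← r.eq]
  simp

variable [CharZero k] [IsAlgClosed k]

lemma cointegral_one_ne_zero : cointegral k H 1 ≠ 0 := by
  obtain ⟨N, hN, hpow⟩ := exists_antipode_comp_antipode_pow_eq_one (k := k) (H := H)
  rw [← trace_antipode_antipode]
  refine trace_ne_zero_of_isSemisimpleRing (fun x => eq_zero_of_cointegral_mul_eq_zero)
    cointegral_mul hN.ne' hpow (z := integral k H) (fun x => ?_) ?_
  · rw [mul_integral, integral_mul]
  · rw [cointegral_integral]
    exact one_ne_zero

lemma antipode_pow_four (x : H) : antipode k (antipode k (antipode k (antipode k x))) = x := by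
  have h := distinguished_mul (k := k) x
  rw [distinguished_eq_one cointegral_one_ne_zero, one_mul, mul_one] at h
  exact h.symm

lemma regularCharacter_antipode_antipode (h : H) :
    regularCharacter k H (antipode k (antipode k h)) = regularCharacter k H h := by
  let σ : Module.End k H := antipode k ∘ₗ antipode k
  have hσ : σ * σ = 1 := LinearMap.ext antipode_pow_four
  have hconj : mulLeft k (σ h) = σ * (mulLeft k h * σ) := LinearMap.ext fun x => by
    simp [σ, antipode_mul_antidistrib, antipode_pow_four]
  change trace k H (mulLeft k (σ h)) = trace k H (mulLeft k h)
  rw [hconj, trace_mul_comm, mul_assoc, hσ, mul_one]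

lemma trace_antipode_antipode_comp_evalFst (f : Module.Dual k H) :
    trace k H ((antipode k ∘ₗ antipode k) ∘ₗ evalFst f) =
      cointegral k H 1 * f (integral k H) := by
  let r := ℛ k (evalFst f (integral k H))
  have hterm (i) : cointegral k H (antipode k (r.right i) * antipode k (antipode k (r.left i))) =
      cointegral k H (r.left i * antipode k (r.right i)) := by
    rw [cointegral_mul, antipode_pow_four]
  rw [trace_comp_evalFst _ f r]
  simp only [comp_apply, hterm]
  rw [← map_sum, sum_mul_antipode_eq_smul, map_smul, counit_evalFst, smul_eq_mul, mul_comm]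

theorem antipode_comp_antipode : antipode k ∘ₗ antipode k = (LinearMap.id : Module.End k H) := by
  let σ : Module.End k H := antipode k ∘ₗ antipode k
  let n : k := Module.finrank k H
  let P : Module.End k H := n⁻¹ • evalFst (regularCharacter k H)
  have hone : (1 : H) ≠ 0 := fun h => cointegral_one_ne_zero (k := k) (H := H) (by rw [h, map_zero])
  have hH : Nontrivial H := nontrivial_of_ne _ _ hone
  have hn : n ≠ 0 := Nat.cast_ne_zero.2 Module.finrank_pos.ne'
  have hσ : σ * σ = 1 := LinearMap.ext antipode_pow_four
  have hP : IsIdempotentElem P := by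
    have hsq : evalFst (regularCharacter k H) * evalFst (regularCharacter k H) =
        n • evalFst (regularCharacter k H) := LinearMap.ext fun x => by
      rw [Module.End.mul_apply, evalFst_evalFst, regularCharacter_comp_evalFst, map_smul]
    rw [IsIdempotentElem, smul_mul_smul_comm, hsq, smul_smul, inv_mul_cancel_right₀ hn]
  have hσP : Commute σ P := Commute.smul_right (LinearMap.ext fun x => by
    have hχ : (regularCharacter k H ∘ₗ antipode k) ∘ₗ antipode k = regularCharacter k H :=
      LinearMap.ext regularCharacter_antipode_antipode
    simp [σ, evalFst_antipode, evalSnd_antipode, hχ]) _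
  have hχ : regularCharacter k H (integral k H) = 1 := by
    have hmul : mulLeft k (integral k H) = (counit (R := k)).smulRight (integral k H) := by
      ext
      simp [integral_mul]
    change trace k H (mulLeft k (integral k H)) = 1
    rw [hmul, trace_smulRight, counit_integral]
  obtain ⟨m, hm⟩ := exists_trace_mul_eq_intCast hσ hP hσP
  have htr : trace k H σ = n * m := by
    rw [← hm, mul_smul_comm, map_smul, smul_eq_mul, mul_inv_cancel_left₀ hn]
    exact trace_antipode_antipode.trans
      ((trace_antipode_antipode_comp_evalFst _).trans (by rw [hχ, mul_one])).symm
  have hm0 : m ≠ 0 := by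
    rintro rfl
    exact cointegral_one_ne_zero (trace_antipode_antipode.symm.trans (htr.trans (by simp)))
  rcases eq_one_or_neg_one_of_trace_eq hσ hm0 htr with h | h
  · exact h
  · have hneg : (1 : H) = -1 := by simpa [σ] using congr($h 1)
    have htwo : (2 : k) • (1 : H) = 0 := by rw [two_smul, eq_neg_iff_add_eq_zero.1 hneg]
    exact absurd ((smul_eq_zero.1 htwo).resolve_left two_ne_zero) hone

@[simp]
lemma antipode_antipode (x : H) : antipode k (antipode k x) = x :=
  congr($antipode_comp_antipode x)

end AntipodeSquare

section AntipodeForm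

open Coalgebra HopfAlgebra LinearMap

variable {k H : Type*} [Field k] [Ring H] [HopfAlgebra k H] [FiniteDimensional k H]
  [IsSemisimpleRing H]

variable (k H) in
/-- The bilinear form `(x, y) ↦ λ(S(x) y)`, where `λ` is the cointegral. It identifies `H` with its
dual in such a way that distinct simple subcoalgebras are orthogonal. -/
def antipodeForm : LinearMap.BilinForm k H :=
  (LinearMap.mul k H).compl₁₂ (antipode k) LinearMap.id |>.compr₂ (cointegral k H)

lemma antipodeForm_apply (x y : H) :
    antipodeForm k H x y = cointegral k H (antipode k x * y) := rfl

lemma antipodeForm_mul_left (a x y : H) :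
    antipodeForm k H (a * x) y = antipodeForm k H x (antipode k a * y) := by
  rw [antipodeForm_apply, antipodeForm_apply, antipode_mul_antidistrib, mul_assoc]

lemma evalFst_antipodeForm_integral (y : H) :
    evalFst (antipodeForm k H y) (integral k H) = y := by
  have hform : antipodeForm k H y = cointegral k H ∘ₗ mulLeft k (antipode k y) := rfl
  rw [hform, evalFst_comp_mulLeft_antipode_integral, evalFst_cointegral_integral, mul_one]

variable [CharZero k] [IsAlgClosed k]

lemma cointegral_mul_comm (x y : H) : cointegral k H (x * y) = cointegral k H (y * x) := by
  rw [cointegral_mul, antipode_antipode]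

lemma cointegral_one : cointegral k H 1 = Module.finrank k H := by
  rw [← trace_antipode_antipode, antipode_comp_antipode, trace_id]

lemma finrank_ne_zero : (Module.finrank k H : k) ≠ 0 :=
  cointegral_one (k := k) (H := H) ▸ cointegral_one_ne_zero

lemma cointegral_comp_antipode : cointegral k H ∘ₗ antipode k = cointegral k H := by
  have hf : cointegral k H ∘ₗ antipode k =
      (cointegral k H ∘ₗ antipode k) (integral k H) • cointegral k H := by
    refine eq_smul_cointegral (antipode_injective (k := k) ?_)
    rw [← evalSnd_antipode, evalSnd_cointegral, distinguished_eq_one cointegral_one_ne_zero]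
    simp
  have hone : (cointegral k H ∘ₗ antipode k) (integral k H) = 1 := by
    refine mul_right_cancel₀ (cointegral_one_ne_zero (k := k) (H := H)) ?_
    simpa using congr($hf.symm 1)
  rwa [hone, one_smul] at hf

lemma trace_evalFst (f : Module.Dual k H) :
    trace k H (evalFst f) = Module.finrank k H * f (integral k H) := by
  rw [← cointegral_one, ← trace_antipode_antipode_comp_evalFst, antipode_comp_antipode, id_comp]

lemma evalFst_integral (f : Module.Dual k H) :
    evalFst f (integral k H) = evalSnd f (integral k H) := by
  refine sub_eq_zero.1 ((Module.forall_dual_apply_eq_zero_iff k _).1 fun g => ?_)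
  have hcomp (f g : Module.Dual k H) : evalFst (f ∘ₗ evalFst g) = evalFst f * evalFst g :=
    LinearMap.ext fun x => (evalFst_evalFst f g x).symm
  have htrace : trace k H (evalFst (f ∘ₗ evalFst g)) = trace k H (evalFst (g ∘ₗ evalFst f)) := by
    rw [hcomp, hcomp, trace_mul_comm]
  rw [trace_evalFst, trace_evalFst] at htrace
  rw [map_sub, sub_eq_zero, ← apply_evalFst g f]
  exact (mul_left_cancel₀ finrank_ne_zero htrace).symm

lemma antipodeForm_comm (x y : H) : antipodeForm k H x y = antipodeForm k H y x := by
  rw [antipodeForm_apply, ← cointegral_comp_antipode, comp_apply, antipode_mul_antidistrib,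
    antipode_antipode, antipodeForm_apply]

lemma antipodeForm_mul_right (a x y : H) :
    antipodeForm k H (x * a) y = antipodeForm k H x (y * antipode k a) := by
  rw [antipodeForm_apply, antipodeForm_apply, antipode_mul_antidistrib, mul_assoc,
    cointegral_mul_comm, mul_assoc]

lemma antipodeForm_evalFst_integral (x : H) (f : Module.Dual k H) :
    antipodeForm k H x (evalFst f (integral k H)) = f x := by
  rw [antipodeForm_comm, antipodeForm_apply, cointegral_antipode_evalFst_mul]

lemma evalFst_antipodeForm (x y : H) :
    evalFst (antipodeForm k H x) y = evalSnd (antipodeForm k H y) x := by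
  refine sub_eq_zero.1 ((Module.forall_dual_apply_eq_zero_iff k _).1 fun φ => ?_)
  rw [map_sub, sub_eq_zero, apply_evalFst, ← apply_evalFst φ]
  calc antipodeForm k H x (evalSnd φ y)
      = antipodeForm k H x (evalFst (antipodeForm k H y) (evalSnd φ (integral k H))) := by
        rw [evalFst_evalSnd, evalFst_antipodeForm_integral]
    _ = antipodeForm k H x (evalFst (antipodeForm k H y ∘ₗ evalFst φ) (integral k H)) := by
        rw [← evalFst_integral, evalFst_evalFst]
    _ = antipodeForm k H y (evalFst φ x) := antipodeForm_evalFst_integral _ _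

end AntipodeForm

section Subcoalgebra

open Coalgebra HopfAlgebra LinearMap

variable {k H : Type} [Field k] [Ring H] [HopfAlgebra k H]

lemma IsSubcoalgebra.exists_repr {A : Submodule k H} (hA : IsSubcoalgebra k H A) {x : H}
    (hx : x ∈ A) : ∃ r : Repr k x (A × A), ∀ i, r.left i ∈ A ∧ r.right i ∈ A := by
  obtain ⟨z, hz⟩ := hA x hx
  obtain ⟨s, rfl⟩ := TensorProduct.exists_finset z
  exact ⟨⟨s, fun i => i.1, fun i => i.2, by simp [← hz]⟩, fun i => ⟨i.1.2, i.2.2⟩⟩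

lemma IsSubcoalgebra.evalFst_mem {A : Submodule k H} (hA : IsSubcoalgebra k H A)
    (f : Module.Dual k H) {x : H} (hx : x ∈ A) : evalFst f x ∈ A := by
  obtain ⟨r, hr⟩ := hA.exists_repr hx
  exact evalFst_eq_sum f r ▸ A.sum_mem fun i _ => A.smul_mem _ (hr i).2

lemma IsSubcoalgebra.evalSnd_mem {A : Submodule k H} (hA : IsSubcoalgebra k H A)
    (f : Module.Dual k H) {x : H} (hx : x ∈ A) : evalSnd f x ∈ A := by
  obtain ⟨r, hr⟩ := hA.exists_repr hx
  exact evalSnd_eq_sum f r ▸ A.sum_mem fun i _ => A.smul_mem _ (hr i).1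

lemma isSubcoalgebra_iff [FiniteDimensional k H] {A : Submodule k H} :
    IsSubcoalgebra k H A ↔ ∀ x ∈ A, ∀ f : Module.Dual k H, evalFst f x ∈ A ∧ evalSnd f x ∈ A := by
  refine ⟨fun hA x hx f => ⟨hA.evalFst_mem f hx, hA.evalSnd_mem f hx⟩, fun hA x hx => ?_⟩
  obtain ⟨p, hp⟩ := A.subtype.exists_leftInverse_of_injective A.ker_subtype
  have hP {y : H} (hy : y ∈ A) : (p y : H) = y := congr(($hp ⟨y, hy⟩ : H))
  let b := Module.finBasis k H
  have hright : (A.subtype ∘ₗ p).lTensor H (comul (R := k) x) = comul x := by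
    simp [← (basisRepr b x).eq, basisRepr, hP (hA x hx _).1]
  have hleft : (A.subtype ∘ₗ p).rTensor H (comul (R := k) x) = comul x := by
    simp [← sum_evalSnd_tmul_basis b x, hP (hA x hx _).2]
  refine ⟨TensorProduct.map p p (comul x), ?_⟩
  rw [← comp_apply, ← TensorProduct.map_comp, ← lTensor_comp_rTensor, comp_apply, hleft, hright]

lemma isCocomm_iff [FiniteDimensional k H] {x : H} :
    IsCocomm k H x ↔ ∀ f : Module.Dual k H, evalFst f x = evalSnd f x := by
  constructor
  · intro hx f
    have hcomm (z : H ⊗[k] H) : TensorProduct.lid k H (f.rTensor H (TensorProduct.comm k H H z)) =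
        TensorProduct.rid k H (f.lTensor H z) := by
      induction z with
      | zero => simp
      | tmul x y => simp
      | add x y hx hy => simp only [map_add, hx, hy]
    rw [evalFst_apply, evalSnd_apply, ← hcomm, hx]
  · intro hx
    let b := Module.finBasis k H
    calc TensorProduct.comm k H H (comul x)
        = ∑ i, evalFst (b.coord i) x ⊗ₜ[k] b i := by simp [← (basisRepr b x).eq, basisRepr]
      _ = comul x := by simp only [hx, sum_evalSnd_tmul_basis]

lemma IsCocomm.mul {x y : H} (hx : IsCocomm k H x) (hy : IsCocomm k H y) :
    IsCocomm k H (x * y) := by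
  rw [IsCocomm, Bialgebra.comul_mul]
  exact (map_mul (Algebra.TensorProduct.comm k H H) _ _).trans (congrArg₂ (· * ·) hx hy)

variable [FiniteDimensional k H]

protected lemma IsSubcoalgebra.inf {A B : Submodule k H} (hA : IsSubcoalgebra k H A)
    (hB : IsSubcoalgebra k H B) : IsSubcoalgebra k H (A ⊓ B) :=
  isSubcoalgebra_iff.2 fun _ hx f => ⟨⟨hA.evalFst_mem f hx.1, hB.evalFst_mem f hx.2⟩,
    ⟨hA.evalSnd_mem f hx.1, hB.evalSnd_mem f hx.2⟩⟩

protected lemma IsSubcoalgebra.iSup {ι : Sort*} {A : ι → Submodule k H}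
    (hA : ∀ i, IsSubcoalgebra k H (A i)) : IsSubcoalgebra k H (⨆ i, A i) := by
  refine isSubcoalgebra_iff.2 fun x hx f => ?_
  have hle : ⨆ i, A i ≤ (⨆ i, A i).comap (evalFst f) ⊓ (⨆ i, A i).comap (evalSnd f) :=
    iSup_le fun i x hx => ⟨Submodule.mem_iSup_of_mem i ((hA i).evalFst_mem f hx),
      Submodule.mem_iSup_of_mem i ((hA i).evalSnd_mem f hx)⟩
  exact hle hx

protected lemma IsSubcoalgebra.mul {A B : Submodule k H} (hA : IsSubcoalgebra k H A)
    (hB : IsSubcoalgebra k H B) : IsSubcoalgebra k H (A * B) := by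
  refine isSubcoalgebra_iff.2 fun x hx f => ?_
  induction hx using Submodule.mul_induction_on' with
  | mem_mul_mem a ha b hb =>
    obtain ⟨r, hr⟩ := hA.exists_repr ha
    obtain ⟨s, hs⟩ := hB.exists_repr hb
    rw [evalFst_eq_sum f (r.mul s), evalSnd_eq_sum f (r.mul s)]
    exact ⟨sum_mem fun i _ => Submodule.smul_mem _ _
        (Submodule.mul_mem_mul (hr i.1).2 (hs i.2).2),
      sum_mem fun i _ => Submodule.smul_mem _ _
        (Submodule.mul_mem_mul (hr i.1).1 (hs i.2).1)⟩
  | add x _ y _ hx hy =>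
    simp only [map_add]
    exact ⟨Submodule.add_mem _ hx.1 hy.1, Submodule.add_mem _ hx.2 hy.2⟩

lemma IsSubcoalgebra.exists_simple_le {A : Submodule k H} (hA : IsSubcoalgebra k H A)
    (h0 : A ≠ ⊥) : ∃ C ≤ A, IsSimpleSubcoalgebra k H C := by
  obtain ⟨C, ⟨hCA, hC, hC0⟩, hmin⟩ := (wellFounded_lt (α := Submodule k H)).has_min
    {C | C ≤ A ∧ IsSubcoalgebra k H C ∧ C ≠ ⊥} ⟨A, le_rfl, hA, h0⟩
  exact ⟨C, hCA, hC, hC0, fun D hD hD' hD0 =>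
    hD.eq_of_not_lt (hmin D ⟨hD.trans hCA, hD', hD0⟩)⟩

lemma IsSimpleSubcoalgebra.le_or_disjoint {A B : Submodule k H}
    (hA : IsSimpleSubcoalgebra k H A) (hB : IsSubcoalgebra k H B) : A ≤ B ∨ A ⊓ B = ⊥ :=
  or_iff_not_imp_right.2 fun h => inf_eq_left.1 (hA.2.2 _ inf_le_left (hA.1.inf hB) h)

end Subcoalgebra

section Orthogonality

open Coalgebra HopfAlgebra LinearMap

variable {k H : Type} [Field k] [Ring H] [HopfAlgebra k H] [FiniteDimensional k H]
  [IsSemisimpleRing H]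

/-- The orthogonal complement of a subspace for the form `(x, y) ↦ λ(S(x) y)`. For a subcoalgebra
it is the complementary subcoalgebra. -/
def perp (A : Submodule k H) : Submodule k H := (antipodeForm k H).orthogonal A

variable [CharZero k] [IsAlgClosed k] {A : Submodule k H}

lemma antipodeForm_isRefl : (antipodeForm k H).IsRefl :=
  fun x y h => (antipodeForm_comm y x).trans h

lemma antipodeForm_nondegenerate : (antipodeForm k H).Nondegenerate :=
  (IsRefl.nondegenerate_iff_separatingLeft (B := antipodeForm k H) antipodeForm_isRefl).2
    fun x hx => (Module.forall_dual_apply_eq_zero_iff k x).1 fun f => by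
      rw [← antipodeForm_evalFst_integral, hx]

lemma perp_perp (A : Submodule k H) : perp (perp A) = A :=
  BilinForm.orthogonal_orthogonal antipodeForm_nondegenerate antipodeForm_isRefl A

protected lemma IsSubcoalgebra.perp (hA : IsSubcoalgebra k H A) :
    IsSubcoalgebra k H (perp A) := by
  refine isSubcoalgebra_iff.2 fun y hy f => ⟨fun x hx => ?_, fun x hx => ?_⟩
  · rw [apply_evalFst, ← evalFst_antipodeForm, apply_evalFst, antipodeForm_comm]
    exact hy _ (hA.evalSnd_mem f hx)
  · rw [← apply_evalFst, evalFst_antipodeForm, ← apply_evalFst, antipodeForm_comm]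
    exact hy _ (hA.evalFst_mem f hx)

lemma IsSubcoalgebra.disjoint_perp (hA : IsSubcoalgebra k H A) : Disjoint A (perp A) := by
  have hB := hA.inf hA.perp
  have hcounit {x : H} (hx : x ∈ A ⊓ perp A) : counit (R := k) x = 0 := by
    obtain ⟨r, hr⟩ := hB.exists_repr hx
    have hsum := congrArg (cointegral k H) (sum_antipode_mul_eq_smul r)
    have hzero (i) : cointegral k H (antipode k (r.left i) * r.right i) = 0 :=
      (hr i).2.2 _ (hr i).1.1
    simp only [map_sum, hzero, Finset.sum_const_zero, map_smul, cointegral_one, smul_eq_mul] at hsum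
    exact (mul_eq_zero.1 hsum.symm).resolve_right finrank_ne_zero
  refine Submodule.disjoint_def.2 fun x hxA hx => ?_
  refine (Module.forall_dual_apply_eq_zero_iff k x).1 fun f => ?_
  rw [← counit_evalFst, hcounit (hB.evalFst_mem f ⟨hxA, hx⟩)]

lemma IsSubcoalgebra.isCompl_perp (hA : IsSubcoalgebra k H A) : IsCompl A (perp A) :=
  (BilinForm.isCompl_orthogonal_iff_disjoint antipodeForm_isRefl).2 hA.disjoint_perp

lemma mul_mem_perp_left {d : H} (h : ∀ x ∈ A, antipode k d * x ∈ A) {y : H} (hy : y ∈ perp A) :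
    d * y ∈ perp A := fun x hx => by
  rw [← antipode_antipode (k := k) d, ← antipodeForm_mul_left]
  exact hy _ (h x hx)

lemma mul_mem_perp_right {d : H} (h : ∀ x ∈ A, x * antipode k d ∈ A) {y : H} (hy : y ∈ perp A) :
    y * d ∈ perp A := fun x hx => by
  rw [← antipode_antipode (k := k) d, ← antipodeForm_mul_right]
  exact hy _ (h x hx)

/-- The projection of `H` onto a subcoalgebra along its orthogonal complement. -/
def IsSubcoalgebra.proj (hA : IsSubcoalgebra k H A) : Module.End k H :=
  A.projection (perp A) hA.isCompl_perp

/-- The functional on `H` which is the counit on a subcoalgebra `A` and vanishes on `perp A`. -/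
def IsSubcoalgebra.localCounit (hA : IsSubcoalgebra k H A) : Module.Dual k H := counit ∘ₗ hA.proj

lemma IsSubcoalgebra.proj_mem (hA : IsSubcoalgebra k H A) (x : H) : hA.proj x ∈ A :=
  Submodule.projection_apply_mem hA.isCompl_perp x

lemma IsSubcoalgebra.sub_proj_mem (hA : IsSubcoalgebra k H A) (x : H) : x - hA.proj x ∈ perp A :=
  Submodule.sub_projection_mem hA.isCompl_perp x

lemma IsSubcoalgebra.proj_eq_self_iff (hA : IsSubcoalgebra k H A) {x : H} :
    hA.proj x = x ↔ x ∈ A := Submodule.projection_eq_self_iff hA.isCompl_perp x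

lemma IsSubcoalgebra.isIdempotentElem_proj (hA : IsSubcoalgebra k H A) :
    IsIdempotentElem hA.proj := Submodule.isIdempotentElem_projection hA.isCompl_perp

lemma IsSubcoalgebra.commute_proj (hA : IsSubcoalgebra k H A) {T : Module.End k H}
    (hT : ∀ x ∈ A, T x ∈ A) (hperp : ∀ x ∈ perp A, T x ∈ perp A) : Commute hA.proj T := by
  rw [IsIdempotentElem.commute_iff hA.isIdempotentElem_proj, proj, Submodule.range_projection,
    Submodule.ker_projection]
  exact ⟨hT, hperp⟩

lemma IsSubcoalgebra.proj_evalFst (hA : IsSubcoalgebra k H A) (f : Module.Dual k H) (x : H) :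
    hA.proj (evalFst f x) = evalFst f (hA.proj x) :=
  congr($(hA.commute_proj (fun _ => hA.evalFst_mem f) (fun _ => hA.perp.evalFst_mem f)) x)

lemma IsSubcoalgebra.proj_evalSnd (hA : IsSubcoalgebra k H A) (f : Module.Dual k H) (x : H) :
    hA.proj (evalSnd f x) = evalSnd f (hA.proj x) :=
  congr($(hA.commute_proj (fun _ => hA.evalSnd_mem f) (fun _ => hA.perp.evalSnd_mem f)) x)

lemma IsSubcoalgebra.evalFst_localCounit (hA : IsSubcoalgebra k H A) :
    evalFst hA.localCounit = hA.proj := by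
  refine LinearMap.ext fun x => sub_eq_zero.1 <|
    (Module.forall_dual_apply_eq_zero_iff k _).1 fun f => ?_
  rw [map_sub, sub_eq_zero, apply_evalFst, localCounit, comp_apply, hA.proj_evalSnd, counit_evalSnd]

lemma IsSubcoalgebra.evalSnd_localCounit (hA : IsSubcoalgebra k H A) :
    evalSnd hA.localCounit = hA.proj := by
  refine LinearMap.ext fun x => sub_eq_zero.1 <|
    (Module.forall_dual_apply_eq_zero_iff k _).1 fun f => ?_
  rw [map_sub, sub_eq_zero, ← apply_evalFst, localCounit, comp_apply, hA.proj_evalFst,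
    counit_evalFst]

lemma IsSubcoalgebra.proj_mul_right (hA : IsSubcoalgebra k H A) {d : H} (h : ∀ x ∈ A, x * d ∈ A)
    (h' : ∀ x ∈ A, x * antipode k d ∈ A) (x : H) : hA.proj (x * d) = hA.proj x * d :=
  congr($(hA.commute_proj (T := mulRight k d) h fun _ => mul_mem_perp_right h') x)

lemma IsSubcoalgebra.proj_mul_left (hA : IsSubcoalgebra k H A) {d : H} (h : ∀ x ∈ A, d * x ∈ A)
    (h' : ∀ x ∈ A, antipode k d * x ∈ A) (x : H) : hA.proj (d * x) = d * hA.proj x :=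
  congr($(hA.commute_proj (T := mulLeft k d) h fun _ => mul_mem_perp_left h') x)

lemma IsSubcoalgebra.trace_proj (hA : IsSubcoalgebra k H A) :
    trace k H hA.proj = Module.finrank k A := by
  rw [trace_eq_finrank_range hA.isIdempotentElem_proj, proj, Submodule.range_projection]

lemma IsSubcoalgebra.antipodeForm_proj (hA : IsSubcoalgebra k H A) {x : H} (hx : x ∈ A) (y : H) :
    antipodeForm k H x (hA.proj y) = antipodeForm k H x y :=
  (sub_eq_zero.1 (by rw [← map_sub]; exact hA.sub_proj_mem y x hx)).symm

end Orthogonality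

section DualCharacter

open Coalgebra HopfAlgebra LinearMap

variable {k H : Type} [Field k] [CharZero k] [IsAlgClosed k] [Ring H] [HopfAlgebra k H]
  [FiniteDimensional k H] [IsSemisimpleRing H] {A B C D : Submodule k H} {K : Subalgebra k H}

/-- The character of the regular representation of the dual algebra `A*` of a subcoalgebra `A`,
as an element of `A`. For a simple subcoalgebra it is a multiple of the irreducible character of
`A`. -/
def IsSubcoalgebra.dualCharacter (hA : IsSubcoalgebra k H A) : H :=
  (Module.finrank k H : k) • hA.proj (integral k H)

lemma IsSubcoalgebra.dualCharacter_mem (hA : IsSubcoalgebra k H A) : hA.dualCharacter ∈ A :=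
  A.smul_mem _ (hA.proj_mem _)

lemma IsSubcoalgebra.isCocomm_dualCharacter (hA : IsSubcoalgebra k H A) :
    IsCocomm k H hA.dualCharacter :=
  isCocomm_iff.2 fun f => by
    rw [dualCharacter, map_smul, map_smul, ← hA.proj_evalFst, ← hA.proj_evalSnd, evalFst_integral]

lemma IsSubcoalgebra.counit_dualCharacter (hA : IsSubcoalgebra k H A) :
    counit (R := k) hA.dualCharacter = Module.finrank k A := by
  rw [← hA.trace_proj, ← hA.evalFst_localCounit, trace_evalFst, dualCharacter, map_smul,
    smul_eq_mul, localCounit, comp_apply]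

lemma IsSubcoalgebra.mul_dualCharacter (hA : IsSubcoalgebra k H A) {d : H}
    (h : ∀ x ∈ A, d * x ∈ A) (h' : ∀ x ∈ A, antipode k d * x ∈ A) :
    d * hA.dualCharacter = counit (R := k) d • hA.dualCharacter := by
  rw [dualCharacter, mul_smul_comm, ← hA.proj_mul_left h h', mul_integral, map_smul, smul_comm]

lemma IsSubcoalgebra.dualCharacter_mul (hA : IsSubcoalgebra k H A) {d : H}
    (h : ∀ x ∈ A, x * d ∈ A) (h' : ∀ x ∈ A, x * antipode k d ∈ A) :
    hA.dualCharacter * d = counit (R := k) d • hA.dualCharacter := by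
  rw [dualCharacter, smul_mul_assoc, ← hA.proj_mul_right h h', integral_mul, map_smul, smul_comm]

lemma IsSubcoalgebra.antipodeForm_dualCharacter (hA : IsSubcoalgebra k H A) {x : H} (hx : x ∈ A) :
    antipodeForm k H x hA.dualCharacter = Module.finrank k H * counit (R := k) x := by
  rw [dualCharacter, map_smul, hA.antipodeForm_proj hx, antipodeForm_apply, mul_integral, map_smul,
    cointegral_integral]
  simp

lemma IsSubcoalgebra.eq_smul_dualCharacter (hA : IsSubcoalgebra k H A) {y : H} (hy : y ∈ A) {t : k}
    (ht : ∀ x ∈ A, antipodeForm k H y x = t * counit (R := k) x) :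
    y = (t / Module.finrank k H) • hA.dualCharacter := by
  refine sub_eq_zero.1 (Submodule.disjoint_def.1 hA.disjoint_perp _
    (A.sub_mem hy (A.smul_mem _ hA.dualCharacter_mem)) fun x hx => ?_)
  rw [map_sub, map_smul, hA.antipodeForm_dualCharacter hx, antipodeForm_comm, ht x hx, smul_eq_mul,
    ← mul_assoc, div_mul_cancel₀ _ finrank_ne_zero, sub_self]

lemma IsCocomm.evalFst_antipodeForm {y : H} (hy : IsCocomm k H y) :
    evalFst (antipodeForm k H y) = evalSnd (antipodeForm k H y) := LinearMap.ext fun x => by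
  rw [MackeyPaper.evalFst_antipodeForm, ← isCocomm_iff.1 hy, MackeyPaper.evalFst_antipodeForm]

/-- Schur's lemma: a cocommutative element is central as an element of the dual algebra. -/
lemma IsSimpleSubcoalgebra.exists_evalFst_antipodeForm_eq_smul (hC : IsSimpleSubcoalgebra k H C)
    {y : H} (hy : IsCocomm k H y) :
    ∃ t : k, ∀ x ∈ C, evalFst (antipodeForm k H y) x = t • x := by
  set T := evalFst (antipodeForm k H y) with hT
  let T' : Module.End k C := T.restrict fun x hx => hC.1.evalFst_mem _ hx
  have : Nontrivial C := Submodule.nontrivial_iff_ne_bot.2 hC.2.1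
  obtain ⟨t, ht⟩ := Module.End.exists_eigenvalue T'
  obtain ⟨v, hv⟩ := ht.exists_hasEigenvector
  have hmem (x : H) : x ∈ C ⊓ T.eigenspace t ↔ x ∈ C ∧ T x = t • x := by
    rw [Submodule.mem_inf, Module.End.mem_eigenspace_iff]
  have hsub : IsSubcoalgebra k H (C ⊓ T.eigenspace t) := by
    refine isSubcoalgebra_iff.2 fun x hx f => ?_
    rw [hmem] at hx
    rw [hmem, hmem]
    refine ⟨⟨hC.1.evalFst_mem f hx.1, ?_⟩, hC.1.evalSnd_mem f hx.1, ?_⟩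
    · rw [hT, hy.evalFst_antipodeForm, ← evalFst_evalSnd, ← hy.evalFst_antipodeForm, ← hT, hx.2,
        map_smul]
    · rw [hT, evalFst_evalSnd, ← hT, hx.2, map_smul]
  have hv0 : C ⊓ T.eigenspace t ≠ ⊥ := fun h => hv.2 <| Subtype.ext <|
    (Submodule.mem_bot k).1 (h ▸ (hmem v).2 ⟨v.2, congrArg Subtype.val hv.apply_eq_smul⟩)
  exact ⟨t, fun x hx => ((hmem x).1 ((hC.2.2 _ inf_le_left hsub hv0).ge hx)).2⟩

lemma IsSimpleSubcoalgebra.exists_eq_smul_dualCharacter (hC : IsSimpleSubcoalgebra k H C) {y : H}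
    (hyC : y ∈ C) (hy : IsCocomm k H y) : ∃ t : k, y = t • hC.1.dualCharacter := by
  obtain ⟨t, ht⟩ := hC.exists_evalFst_antipodeForm_eq_smul hy
  exact ⟨_, hC.1.eq_smul_dualCharacter hyC fun x hx => by
    rw [← counit_evalFst (antipodeForm k H y) x, ht x hx, map_smul, smul_eq_mul]⟩

lemma IsHopfSubalgebra.evalFst_antipodeForm_mul (hK : IsHopfSubalgebra k H K) {y : H}
    (hy : ∀ a ∈ K, y * a = counit (R := k) a • y) {a : H} (ha : a ∈ K) (x : H) :
    evalFst (antipodeForm k H y) (x * a) = evalFst (antipodeForm k H y) x * a := by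
  obtain ⟨r, hr⟩ := hK.1.exists_repr ha
  have hform : antipodeForm k H (x * a) = antipodeForm k H x ∘ₗ mulRight k (antipode k a) :=
    LinearMap.ext fun z => antipodeForm_mul_right a x z
  rw [evalFst_antipodeForm, hform,
    evalSnd_comp_mulRight_antipode _ r fun i _ => hy _ (hr i).1, evalFst_antipodeForm]

lemma IsSimpleSubcoalgebra.exists_eq_smul_dualCharacter_mul (hC : IsSimpleSubcoalgebra k H C)
    (hK : IsHopfSubalgebra k H K) {y : H} (hyCK : y ∈ C * K.toSubmodule) (hy : IsCocomm k H y)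
    (hyK : ∀ a ∈ K, y * a = counit (R := k) a • y) :
    ∃ t : k, y = t • (hC.1.mul hK.1).dualCharacter := by
  obtain ⟨t, ht⟩ := hC.exists_evalFst_antipodeForm_eq_smul hy
  refine ⟨_, (hC.1.mul hK.1).eq_smul_dualCharacter hyCK (t := t) fun x hx => ?_⟩
  suffices h : evalFst (antipodeForm k H y) x = t • x by
    rw [← counit_evalFst (antipodeForm k H y) x, h, map_smul, smul_eq_mul]
  induction hx using Submodule.mul_induction_on' with
  | mem_mul_mem c hc a ha => rw [hK.evalFst_antipodeForm_mul hyK ha, ht c hc, smul_mul_assoc]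
  | add x _ z _ hx hz => rw [map_add, hx, hz, smul_add]

lemma IsSubcoalgebra.le_perp_of_disjoint (hA : IsSubcoalgebra k H A) (hB : IsSubcoalgebra k H B)
    (h : A ⊓ B = ⊥) : A ≤ perp B := by
  intro x hx
  have hmem : hB.proj x ∈ A ⊓ B :=
    ⟨hB.evalFst_localCounit ▸ hA.evalFst_mem hB.localCounit hx, hB.proj_mem x⟩
  rw [h, Submodule.mem_bot] at hmem
  simpa [hmem] using hB.sub_proj_mem x

lemma IsSimpleSubcoalgebra.le_or_le_perp (hA : IsSimpleSubcoalgebra k H A)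
    (hB : IsSubcoalgebra k H B) : A ≤ B ∨ A ≤ perp B :=
  (hA.le_or_disjoint hB).imp_right (hA.1.le_perp_of_disjoint hB)

lemma IsSubcoalgebra.iSup_simple_eq (hA : IsSubcoalgebra k H A) :
    ⨆ E : {E : Submodule k H // IsSimpleSubcoalgebra k H E ∧ E ≤ A}, E.1 = A := by
  set Y := ⨆ E : {E : Submodule k H // IsSimpleSubcoalgebra k H E ∧ E ≤ A}, E.1
  have hYA : Y ≤ A := iSup_le fun E => E.2.2
  have hY : IsSubcoalgebra k H Y := IsSubcoalgebra.iSup fun E => E.2.1.1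
  have hdisj : A ⊓ perp Y = ⊥ := by
    by_contra h
    obtain ⟨E, hE, hEs⟩ := (hA.inf hY.perp).exists_simple_le h
    have hEY : E ≤ Y := le_iSup_of_le ⟨E, hEs, hE.trans inf_le_left⟩ le_rfl
    exact hEs.2.1 (le_bot_iff.1 (hY.disjoint_perp hEY (hE.trans inf_le_right)))
  refine le_antisymm hYA fun x hx => ?_
  have hmem : x - hY.proj x ∈ A ⊓ perp Y :=
    ⟨A.sub_mem hx (hYA (hY.proj_mem x)), hY.sub_proj_mem x⟩
  rw [hdisj, Submodule.mem_bot, sub_eq_zero] at hmem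
  exact hmem ▸ hY.proj_mem x

lemma iSupIndep_of_le_perp {ι : Type*} {F : ι → Submodule k H} (hF : ∀ i, IsSubcoalgebra k H (F i))
    (h : ∀ i j, i ≠ j → F i ≤ perp (F j)) : iSupIndep F := fun i =>
  (hF i).disjoint_perp.mono_right (iSup₂_le fun j hj => h j i hj)

end DualCharacter

section TensorSquare

open Coalgebra HopfAlgebra LinearMap

lemma apply_evalFst_comp {k C D : Type*} [Field k] [AddCommGroup C] [Module k C] [Coalgebra k C]
    [AddCommGroup D] [Module k D] [Coalgebra k D] (g : C →ₗc[k] D) (f : Module.Dual k D) (x : C) :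
    g (evalFst (f ∘ₗ g.toLinearMap) x) = evalFst f (g x) := by
  rw [evalFst_eq_sum _ (ℛ k x), evalFst_eq_sum f ((ℛ k x).induced g)]
  simp

lemma isIdempotentElem_evalFst {k C : Type*} [Field k] [AddCommGroup C] [Module k C]
    [Coalgebra k C] {f : Module.Dual k C} (hf : f ∘ₗ evalFst f = f) :
    IsIdempotentElem (evalFst f) :=
  LinearMap.ext fun x => by rw [Module.End.mul_apply, evalFst_evalFst, hf]

lemma evalFst_dualDistrib_tmul {k H : Type*} [Field k] [Ring H] [HopfAlgebra k H]
    (f g : Module.Dual k H) : evalFst (TensorProduct.dualDistrib k H H (f ⊗ₜ g)) =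
      TensorProduct.map (evalFst f) (evalFst g) :=
  TensorProduct.ext' fun x y => by
    rw [evalFst_eq_sum _ ((ℛ k x).tmul (ℛ k y)), TensorProduct.map_tmul,
      evalFst_eq_sum f (ℛ k x), evalFst_eq_sum g (ℛ k y), TensorProduct.sum_tmul,
      Finset.sum_congr rfl fun _ _ => TensorProduct.tmul_sum _ _ _, ← Finset.sum_product']
    refine Finset.sum_congr rfl fun _ _ => ?_
    rw [TensorProduct.smul_tmul_smul]
    rfl

lemma evalSnd_dualDistrib_tmul {k H : Type*} [Field k] [Ring H] [HopfAlgebra k H]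
    (f g : Module.Dual k H) : evalSnd (TensorProduct.dualDistrib k H H (f ⊗ₜ g)) =
      TensorProduct.map (evalSnd f) (evalSnd g) :=
  TensorProduct.ext' fun x y => by
    rw [evalSnd_eq_sum _ ((ℛ k x).tmul (ℛ k y)), TensorProduct.map_tmul,
      evalSnd_eq_sum f (ℛ k x), evalSnd_eq_sum g (ℛ k y), TensorProduct.sum_tmul,
      Finset.sum_congr rfl fun _ _ => TensorProduct.tmul_sum _ _ _, ← Finset.sum_product']
    refine Finset.sum_congr rfl fun _ _ => ?_
    rw [TensorProduct.smul_tmul_smul]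
    rfl

lemma trace_evalFst_tensorProduct {k H : Type*} [Field k] [CharZero k] [IsAlgClosed k] [Ring H]
    [HopfAlgebra k H] [FiniteDimensional k H] [IsSemisimpleRing H]
    (f : Module.Dual k (H ⊗[k] H)) :
    trace k _ (evalFst f) = Module.finrank k H ^ 2 * f (integral k H ⊗ₜ integral k H) := by
  obtain ⟨z, rfl⟩ : ∃ z, TensorProduct.dualDistrib k H H z = f :=
    (TensorProduct.dualDistribEquiv k H H).surjective f
  induction z with
  | zero => simp
  | add z w hz hw => simp only [map_add, hz, hw, LinearMap.add_apply, mul_add]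
  | tmul f g =>
    rw [evalFst_dualDistrib_tmul, trace_tensorProduct', trace_evalFst, trace_evalFst,
      TensorProduct.dualDistrib_apply]
    ring

variable {k H : Type} [Field k] [CharZero k] [IsAlgClosed k] [Ring H] [HopfAlgebra k H]
  [FiniteDimensional k H] [IsSemisimpleRing H] {A B F : Submodule k H}

lemma IsSubcoalgebra.localCounit_comp_mul_evalFst (hF : IsSubcoalgebra k H F)
    (z : H ⊗[k] H) :
    hF.localCounit (mul' k H (evalFst (hF.localCounit ∘ₗ mul' k H) z)) =
      hF.localCounit (mul' k H z) := by
  have h : mul' k H (evalFst (hF.localCounit ∘ₗ mul' k H) z) =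
      evalFst hF.localCounit (mul' k H z) :=
    apply_evalFst_comp (Bialgebra.mulCoalgHom k H) hF.localCounit z
  rw [h, hF.evalFst_localCounit, localCounit, comp_apply, comp_apply,
    hF.proj_eq_self_iff.2 (hF.proj_mem _)]

/-- The functional `x ⊗ y ↦ ε(p_F(p_A(x) p_B(y)))` on `H ⊗ H` for subcoalgebras `A`, `B`, `F`: an
idempotent of the dual algebra, whose rank is the multiplicity with which `F` occurs in the product
of `A` and `B`. -/
def IsSubcoalgebra.productFunctional (hF : IsSubcoalgebra k H F) (hA : IsSubcoalgebra k H A)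
    (hB : IsSubcoalgebra k H B) : Module.Dual k (H ⊗[k] H) :=
  hF.localCounit ∘ₗ mul' k H ∘ₗ TensorProduct.map hA.proj hB.proj

lemma IsSubcoalgebra.productFunctional_comp_evalFst (hF : IsSubcoalgebra k H F)
    (hA : IsSubcoalgebra k H A) (hB : IsSubcoalgebra k H B) :
    hF.productFunctional hA hB ∘ₗ evalFst (hF.productFunctional hA hB) =
      hF.productFunctional hA hB := by
  set P := TensorProduct.map hA.proj hB.proj with hP
  set ψ := TensorProduct.dualDistrib k H H (hA.localCounit ⊗ₜ hB.localCounit)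
  set φ := hF.localCounit ∘ₗ mul' k H
  have hfst : evalFst ψ = P := by
    rw [evalFst_dualDistrib_tmul, hA.evalFst_localCounit, hB.evalFst_localCounit]
  have hsnd : evalSnd ψ = P := by
    rw [evalSnd_dualDistrib_tmul, hA.evalSnd_localCounit, hB.evalSnd_localCounit]
  have hidem (z) : P (P z) = P z := by
    rw [hP, ← Module.End.mul_apply, ← TensorProduct.map_mul,
      hA.isIdempotentElem_proj.eq, hB.isIdempotentElem_proj.eq]
  change (φ ∘ₗ P) ∘ₗ evalFst (φ ∘ₗ P) = φ ∘ₗ P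
  refine LinearMap.ext fun z => ?_
  calc φ (P (evalFst (φ ∘ₗ P) z))
      = φ (P (evalFst φ (P z))) := by rw [← hfst, ← evalFst_evalFst, hfst]
    _ = φ (evalFst φ (P (P z))) := by rw [← hsnd, evalFst_evalSnd _ _ (evalSnd ψ z)]
    _ = φ (P z) := by rw [hidem]; exact hF.localCounit_comp_mul_evalFst _

lemma IsSubcoalgebra.mul_le_perp (hF : IsSubcoalgebra k H F) (hA : IsSubcoalgebra k H A)
    (hB : IsSubcoalgebra k H B)
    (h : hF.localCounit (hA.dualCharacter * hB.dualCharacter) = 0) : A * B ≤ perp F := by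
  set G := hF.productFunctional hA hB with hG
  have hidem : IsIdempotentElem (evalFst G) :=
    isIdempotentElem_evalFst (hF.productFunctional_comp_evalFst hA hB)
  have htrace : trace k _ (evalFst G) = 0 := by
    rw [trace_evalFst_tensorProduct, ← h, hG, productFunctional, dualCharacter, dualCharacter]
    simp
    ring
  have hG0 : G = 0 := LinearMap.ext fun z => by
    rw [← counit_evalFst G z, hidem.trace_eq_zero_iff.1 htrace]
    simp
  have hker : A * B ≤ ker hF.localCounit := Submodule.mul_le.2 fun a ha b hb => by
    simpa [hG, productFunctional, hA.proj_eq_self_iff.2 ha, hB.proj_eq_self_iff.2 hb] using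
      congr($hG0 (a ⊗ₜ b))
  intro z hz
  have hproj : hF.proj z = 0 := (Module.forall_dual_apply_eq_zero_iff k _).1 fun f => by
    rw [← hF.evalFst_localCounit, apply_evalFst]
    exact hker ((hA.mul hB).evalSnd_mem f hz)
  simpa [hproj] using hF.sub_proj_mem z

end TensorSquare

section Cosets

open Coalgebra HopfAlgebra LinearMap

section Algebra

variable {k H : Type*} [Field k] [Ring H] [Algebra k H] (A : Submodule k H) (L K : Subalgebra k H)

lemma one_le_toSubmodule : 1 ≤ K.toSubmodule := Submodule.one_le.2 K.one_mem

lemma le_mul_toSubmodule : A ≤ A * K.toSubmodule :=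
  le_mul_of_one_le_right' (one_le_toSubmodule K)

lemma le_doubleCoset : A ≤ L.toSubmodule * A * K.toSubmodule :=
  (le_mul_of_one_le_left' (one_le_toSubmodule L)).trans (le_mul_toSubmodule _ K)

lemma toSubmodule_mul_self : K.toSubmodule * K.toSubmodule = K.toSubmodule :=
  K.isIdempotentElem_toSubmodule

lemma toSubmodule_mul_doubleCoset :
    L.toSubmodule * (L.toSubmodule * A * K.toSubmodule) = L.toSubmodule * A * K.toSubmodule := by
  rw [← mul_assoc, ← mul_assoc, toSubmodule_mul_self]

lemma doubleCoset_mul_toSubmodule :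
    L.toSubmodule * A * K.toSubmodule * K.toSubmodule = L.toSubmodule * A * K.toSubmodule := by
  rw [mul_assoc, toSubmodule_mul_self]

variable {L K A} in
lemma doubleCoset_le {B : Submodule k H} (h : A ≤ L.toSubmodule * B * K.toSubmodule) :
    L.toSubmodule * A * K.toSubmodule ≤ L.toSubmodule * B * K.toSubmodule :=
  calc L.toSubmodule * A * K.toSubmodule
      ≤ L.toSubmodule * (L.toSubmodule * B * K.toSubmodule) * K.toSubmodule := by gcongr
    _ = _ := by rw [toSubmodule_mul_doubleCoset, doubleCoset_mul_toSubmodule]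

end Algebra

lemma antipode_mul_mem {k H : Type} [Field k] [Ring H] [HopfAlgebra k H] [FiniteDimensional k H]
    {A D : Submodule k H} (hD : IsSubcoalgebra k H D) (h : D * A ≤ A) {d x : H} (hd : d ∈ D)
    (hx : x ∈ A) : antipode k d * x ∈ A := by
  let N := Submodule.map₂ (TensorProduct.mk k H H) D A
  have hle : N.map (galois k H) ≤ N := Submodule.map_le_iff_le_comap.2 <|
    Submodule.map₂_le.2 fun d hd x hx => by
      obtain ⟨r, hr⟩ := hD.exists_repr hd
      rw [Submodule.mem_comap, TensorProduct.mk_apply, galois_tmul, ← r.eq, Finset.sum_mul]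
      exact sum_mem fun i _ => by
        simpa using Submodule.apply_mem_map₂ (TensorProduct.mk k H H) (hr i).1
          (h (Submodule.mul_mem_mul (hr i).2 hx))
  have hmap : N.map (galois k H) = N := Submodule.eq_of_le_of_finrank_eq hle
    (Submodule.equivMapOfInjective _ galois_injective N).finrank_eq.symm
  obtain ⟨z, hz, hzdx⟩ : d ⊗ₜ x ∈ N.map (galois k H) :=
    hmap.ge (Submodule.apply_mem_map₂ (TensorProduct.mk k H H) hd hx)
  have hgalois : mul' k H ∘ₗ (antipode k).rTensor H ∘ₗ galois k H =
      TensorProduct.lid k H ∘ₗ (counit (R := k) (A := H)).rTensor H :=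
    TensorProduct.ext' fun y w => by
      simp only [comp_apply, galois_tmul]
      rw [← (ℛ k y).eq, Finset.sum_mul]
      simp [← mul_assoc, ← Finset.sum_mul, sum_antipode_mul_eq_smul]
  have hN : N ≤ A.comap (TensorProduct.lid k H ∘ₗ (counit (R := k) (A := H)).rTensor H) :=
    Submodule.map₂_le.2 fun y _ w hw => by simpa using A.smul_mem _ hw
  have hSdx := hN hz
  rw [← hgalois, Submodule.mem_comap, comp_apply, comp_apply, hzdx] at hSdx
  simpa using hSdx

variable {k H : Type} [Field k] [Ring H] [HopfAlgebra k H] [FiniteDimensional k H]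
  {L K : Subalgebra k H} {A C D : Submodule k H}

lemma IsSubcoalgebra.doubleCoset (hC : IsSubcoalgebra k H C) (hL : IsHopfSubalgebra k H L)
    (hK : IsHopfSubalgebra k H K) : IsSubcoalgebra k H (L.toSubmodule * C * K.toSubmodule) :=
  (hL.1.mul hC).mul hK.1

variable [CharZero k] [IsAlgClosed k] [IsSemisimpleRing H]

lemma IsHopfSubalgebra.mul_perp_le (hL : IsHopfSubalgebra k H L) (h : L.toSubmodule * A ≤ A) :
    L.toSubmodule * perp A ≤ perp A :=
  Submodule.mul_le.2 fun d hd _ => mul_mem_perp_left fun _ hx =>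
    h (Submodule.mul_mem_mul (hL.2 d hd) hx)

lemma IsHopfSubalgebra.perp_mul_le (hK : IsHopfSubalgebra k H K) (h : A * K.toSubmodule ≤ A) :
    perp A * K.toSubmodule ≤ perp A :=
  Submodule.mul_le.2 fun _ hy d hd => mul_mem_perp_right (fun _ hx =>
    h (Submodule.mul_mem_mul hx (hK.2 d hd))) hy

lemma doubleCoset_le_perp (hL : IsHopfSubalgebra k H L) (hK : IsHopfSubalgebra k H K)
    (h : D ≤ perp (L.toSubmodule * C * K.toSubmodule)) :
    L.toSubmodule * D * K.toSubmodule ≤ perp (L.toSubmodule * C * K.toSubmodule) :=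
  calc L.toSubmodule * D * K.toSubmodule
      ≤ L.toSubmodule * perp (L.toSubmodule * C * K.toSubmodule) * K.toSubmodule := by gcongr
    _ ≤ perp (L.toSubmodule * C * K.toSubmodule) * K.toSubmodule := by
        gcongr
        exact hL.mul_perp_le (toSubmodule_mul_doubleCoset C L K).le
    _ ≤ _ := hK.perp_mul_le (doubleCoset_mul_toSubmodule C L K).le

lemma doubleCoset_eq (hL : IsHopfSubalgebra k H L) (hK : IsHopfSubalgebra k H K)
    (hC : IsSimpleSubcoalgebra k H C) (hD : IsSimpleSubcoalgebra k H D)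
    (h : C ≤ L.toSubmodule * D * K.toSubmodule) :
    L.toSubmodule * C * K.toSubmodule = L.toSubmodule * D * K.toSubmodule := by
  have hLCK := hC.1.doubleCoset hL hK
  rcases hD.le_or_le_perp hLCK with hle | hperp
  · exact (doubleCoset_le h).antisymm (doubleCoset_le hle)
  · exact absurd (le_bot_iff.1 (hLCK.disjoint_perp (le_doubleCoset C L K)
      (h.trans (doubleCoset_le_perp hL hK hperp)))) hC.2.1

lemma doubleCoset_le_perp_of_ne (hL : IsHopfSubalgebra k H L) (hK : IsHopfSubalgebra k H K)
    (hC : IsSimpleSubcoalgebra k H C) (hD : IsSimpleSubcoalgebra k H D)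
    (h : L.toSubmodule * C * K.toSubmodule ≠ L.toSubmodule * D * K.toSubmodule) :
    L.toSubmodule * C * K.toSubmodule ≤ perp (L.toSubmodule * D * K.toSubmodule) :=
  doubleCoset_le_perp hL hK <|
    (hC.le_or_le_perp (hD.1.doubleCoset hL hK)).resolve_left fun hle =>
      h (doubleCoset_eq hL hK hC hD hle)

end Cosets

section Conjugate

open Coalgebra HopfAlgebra LinearMap

section Subcoalgebra

variable {k H : Type} [Field k] [Ring H] [HopfAlgebra k H] [FiniteDimensional k H]
  {K : Subalgebra k H} {B C : Submodule k H} {Λ : H}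

lemma isSubcoalgebra_one : IsSubcoalgebra k H (1 : Submodule k H) := by
  refine isSubcoalgebra_iff.2 fun x hx f => ?_
  obtain ⟨t, rfl⟩ := Submodule.mem_one.1 hx
  have hone : (1 : H) ∈ (1 : Submodule k H) := Submodule.one_le.1 le_rfl
  rw [Algebra.algebraMap_eq_smul_one, map_smul, map_smul, evalFst_one, evalSnd_one]
  exact ⟨Submodule.smul_mem _ _ (Submodule.smul_mem _ _ hone),
    Submodule.smul_mem _ _ (Submodule.smul_mem _ _ hone)⟩

lemma isSubcoalgebra_top : IsSubcoalgebra k H (⊤ : Submodule k H) :=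
  isSubcoalgebra_iff.2 fun _ _ _ => ⟨trivial, trivial⟩

lemma IsSubcoalgebra.map_antipode (hB : IsSubcoalgebra k H B) :
    IsSubcoalgebra k H (B.map (antipode k)) := by
  refine isSubcoalgebra_iff.2 ?_
  rintro _ ⟨b, hb, rfl⟩ f
  rw [evalFst_antipode, evalSnd_antipode]
  exact ⟨⟨_, hB.evalSnd_mem _ hb, rfl⟩, ⟨_, hB.evalFst_mem _ hb, rfl⟩⟩

lemma isSubcoalgebra_conjK : IsSubcoalgebra k H (conjK k H K Λ C) := by
  rw [conjK, sSup_eq_iSup']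
  exact IsSubcoalgebra.iSup fun D => D.2.1.1

lemma finrank_subalgebra_ne_zero [CharZero k] (A : Subalgebra k H) :
    (Module.finrank k A : k) ≠ 0 := by
  have : Nontrivial H := (Bialgebra.counitAlgHom k H).toRingHom.domain_nontrivial
  exact Nat.cast_ne_zero.2 Module.finrank_pos.ne'

end Subcoalgebra

variable {k H : Type} [Field k] [CharZero k] [IsAlgClosed k] [Ring H] [HopfAlgebra k H]
  [FiniteDimensional k H] [IsSemisimpleRing H] {L K : Subalgebra k H} {B C D : Submodule k H}
  {Λ : H}

lemma IsIdempotentIntegral.smul_eq_dualCharacter (hΛ : IsIdempotentIntegral k H K Λ)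
    (hK : IsHopfSubalgebra k H K) : (Module.finrank k K : k) • Λ = hK.1.dualCharacter := by
  have hleft : Λ * hK.1.dualCharacter = hK.1.dualCharacter := by
    rw [hK.1.mul_dualCharacter (fun x => K.mul_mem hΛ.1) (fun x => K.mul_mem (hK.2 Λ hΛ.1)),
      hΛ.2.1, one_smul]
  rw [← hleft, (hΛ.2.2 _ hK.1.dualCharacter_mem).2, hK.1.counit_dualCharacter]
  rfl

lemma IsHopfSubalgebra.exists_isIdempotentIntegral (hK : IsHopfSubalgebra k H K) :
    ∃ Λ, IsIdempotentIntegral k H K Λ := by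
  refine ⟨(Module.finrank k K : k)⁻¹ • hK.1.dualCharacter,
    K.smul_mem hK.1.dualCharacter_mem _, ?_, fun x hx => ⟨?_, ?_⟩⟩
  · rw [map_smul, hK.1.counit_dualCharacter, smul_eq_mul]
    exact inv_mul_cancel₀ (finrank_subalgebra_ne_zero K)
  · rw [mul_smul_comm, smul_comm, hK.1.mul_dualCharacter (fun _ => K.mul_mem hx)
      fun _ => K.mul_mem (hK.2 x hx)]
  · rw [smul_mul_assoc, smul_comm, hK.1.dualCharacter_mul (fun _ hy => K.mul_mem hy hx)
      fun _ hy => K.mul_mem hy (hK.2 x hx)]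

lemma IsIdempotentIntegral.isCocomm (hΛ : IsIdempotentIntegral k H K Λ)
    (hK : IsHopfSubalgebra k H K) : IsCocomm k H Λ := by
  have hcocomm := isCocomm_iff.1 hK.1.isCocomm_dualCharacter
  refine isCocomm_iff.2 fun f => smul_right_injective H (finrank_subalgebra_ne_zero K) ?_
  simp only [← map_smul, hΛ.smul_eq_dualCharacter hK, hcocomm]

lemma IsSimpleSubcoalgebra.exists_dualCharacter_mul_integral (hC : IsSimpleSubcoalgebra k H C)
    (hK : IsHopfSubalgebra k H K) (hΛ : IsIdempotentIntegral k H K Λ) :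
    ∃ t : k, t ≠ 0 ∧ hC.1.dualCharacter * Λ = t • (hC.1.mul hK.1).dualCharacter := by
  obtain ⟨t, ht⟩ := hC.exists_eq_smul_dualCharacter_mul hK
    (Submodule.mul_mem_mul hC.1.dualCharacter_mem hΛ.1)
    (hC.1.isCocomm_dualCharacter.mul (hΛ.isCocomm hK)) fun a ha => by
      rw [mul_assoc, (hΛ.2.2 a ha).2, mul_smul_comm]
  refine ⟨t, fun ht0 => hC.2.1 (Submodule.finrank_eq_zero.1 ?_), ht⟩
  have hcounit := congr(counit (R := k) $ht)
  rw [ht0, zero_smul, map_zero, Bialgebra.counit_mul, hC.1.counit_dualCharacter, hΛ.2.1,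
    mul_one] at hcounit
  exact_mod_cast hcounit

lemma IsSubcoalgebra.mul_le_of_dualCharacter_mul (hD : IsSubcoalgebra k H D)
    (hB : IsSubcoalgebra k H B) (h : hD.dualCharacter * hB.dualCharacter =
      counit (R := k) hD.dualCharacter • hB.dualCharacter) : D * B ≤ B := by
  have hperp : hB.perp.localCounit hB.dualCharacter = 0 := by
    have hproj : hB.perp.proj hB.dualCharacter = 0 :=
      (Submodule.projection_apply_eq_zero_iff _).2 ((perp_perp B).ge hB.dualCharacter_mem)
    rw [IsSubcoalgebra.localCounit, comp_apply, hproj, map_zero]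
  exact (hB.perp.mul_le_perp hD hB (by rw [h, map_smul, hperp, smul_zero])).trans (perp_perp B).le

lemma forall_isCocomm_mul_eq_smul_iff (hK : IsHopfSubalgebra k H K)
    (hΛ : IsIdempotentIntegral k H K Λ) (hC : IsSimpleSubcoalgebra k H C)
    (hD : IsSimpleSubcoalgebra k H D) :
    (∀ d ∈ D, IsCocomm k H d → ∀ c ∈ C, IsCocomm k H c →
      d * (c * Λ) = counit (R := k) d • (c * Λ)) ↔
      D * (C * K.toSubmodule) ≤ C * K.toSubmodule := by
  obtain ⟨t, ht0, ht⟩ := hC.exists_dualCharacter_mul_integral hK hΛ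
  have hCK := hC.1.mul hK.1
  refine ⟨fun h => hD.1.mul_le_of_dualCharacter_mul hCK ?_, fun h d hd _ c hc hcc => ?_⟩
  · have hmul := h _ hD.1.dualCharacter_mem hD.1.isCocomm_dualCharacter
      _ hC.1.dualCharacter_mem hC.1.isCocomm_dualCharacter
    rw [ht, mul_smul_comm, smul_comm] at hmul
    exact smul_right_injective H ht0 hmul
  · obtain ⟨s, rfl⟩ := hC.exists_eq_smul_dualCharacter hc hcc
    rw [smul_mul_assoc, ht, mul_smul_comm, mul_smul_comm,
      hCK.mul_dualCharacter (fun x hx => h (Submodule.mul_mem_mul hd hx))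
        (fun x hx => antipode_mul_mem hD.1 h hd hx), smul_comm t, smul_comm s]

lemma le_conjK_iff (hK : IsHopfSubalgebra k H K) (hΛ : IsIdempotentIntegral k H K Λ)
    (hC : IsSimpleSubcoalgebra k H C) (hB : IsSubcoalgebra k H B) :
    B ≤ conjK k H K Λ C ↔ B * (C * K.toSubmodule) ≤ C * K.toSubmodule := by
  constructor
  · intro h
    refine (mul_le_mul_left h _).trans ?_
    rw [conjK, sSup_eq_iSup', Submodule.iSup_mul]
    exact iSup_le fun D => (forall_isCocomm_mul_eq_smul_iff hK hΛ hC D.2.1).1 D.2.2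
  · intro h
    conv_lhs => rw [← hB.iSup_simple_eq]
    exact iSup_le fun E => le_sSup ⟨E.2.1, (forall_isCocomm_mul_eq_smul_iff hK hΛ hC E.2.1).2
      ((mul_le_mul_left E.2.2 _).trans h)⟩

lemma exists_isHopfSubalgebra_eq_inf_conjK (hL : IsHopfSubalgebra k H L)
    (hK : IsHopfSubalgebra k H K) (hΛ : IsIdempotentIntegral k H K Λ)
    (hC : IsSimpleSubcoalgebra k H C) : ∃ L' : Subalgebra k H, IsHopfSubalgebra k H L' ∧
      L'.toSubmodule = L.toSubmodule ⊓ conjK k H K Λ C := by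
  have hB := hL.1.inf (isSubcoalgebra_conjK (K := K) (Λ := Λ) (C := C))
  set B := L.toSubmodule ⊓ conjK k H K Λ C
  have hBCK : B * (C * K.toSubmodule) ≤ C * K.toSubmodule :=
    (le_conjK_iff hK hΛ hC hB).1 inf_le_right
  have hone : 1 ≤ B := le_inf (one_le_toSubmodule L)
    ((le_conjK_iff hK hΛ hC isSubcoalgebra_one).2 (one_mul _).le)
  have hmul : B * B ≤ B := le_inf
    ((mul_le_mul' inf_le_left inf_le_left).trans (toSubmodule_mul_self L).le) <|
    (le_conjK_iff hK hΛ hC (hB.mul hB)).2 <| by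
      rw [mul_assoc]
      exact (mul_le_mul_right hBCK _).trans hBCK
  have hantipode : B.map (antipode k) ≤ conjK k H K Λ C :=
    (le_conjK_iff hK hΛ hC hB.map_antipode).2 <| Submodule.mul_le.2 <| by
      rintro _ ⟨b, hb, rfl⟩ y hy
      exact antipode_mul_mem hB hBCK hb hy
  let L' := B.toSubalgebra (Submodule.one_le.1 hone) fun x y hx hy =>
    hmul (Submodule.mul_mem_mul hx hy)
  exact ⟨L', ⟨hB, fun x hx => ⟨hL.2 x hx.1, hantipode ⟨x, hx, rfl⟩⟩⟩, rfl⟩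

end Conjugate

section Casimir

open Coalgebra HopfAlgebra LinearMap

section Operator

variable {k H V : Type*} [Field k] [Ring H] [HopfAlgebra k H] [AddCommGroup V] [Module k V]

/-- The operator `h ⊗ v ↦ hΛ₁ ⊗ S(Λ₂)v` on `H ⊗ V`. If `Λ` is the idempotent integral of a Hopf
subalgebra `A` acting on `V` by `ρ`, it is a projection whose kernel consists of the relations
`ha ⊗ v - h ⊗ av` defining `H ⊗_A V`. -/
def casimir (Λ : H) (ρ : H →ₗ[k] Module.End k V) : Module.End k (H ⊗[k] V) :=
  TensorProduct.homTensorHomMap (RingHom.id k) H V H V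
    (TensorProduct.map (LinearMap.mul k H).flip (ρ ∘ₗ antipode k) (comul Λ))

variable {Λ : H} (ρ : H →ₗ[k] Module.End k V)

lemma casimir_eq_sum {ι : Type*} (r : Repr k Λ ι) :
    casimir Λ ρ =
      ∑ i ∈ r.index, TensorProduct.map (mulRight k (r.left i)) (ρ (antipode k (r.right i))) := by
  rw [casimir, ← r.eq, map_sum, map_sum]
  rfl

lemma casimir_tmul (h : H) (v : V) : casimir Λ ρ (h ⊗ₜ v) =
    TensorProduct.map (mulLeft k h) (ρ.flip v ∘ₗ antipode k) (comul Λ) := by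
  rw [casimir_eq_sum ρ (ℛ k Λ), ← (ℛ k Λ).eq, map_sum, LinearMap.sum_apply]
  rfl

lemma casimir_smul (h : H) (z : H ⊗[k] V) : casimir Λ ρ (h • z) = h • casimir Λ ρ z := by
  suffices casimir Λ ρ ∘ₗ Algebra.lsmul k k (H ⊗[k] V) h =
      Algebra.lsmul k k (H ⊗[k] V) h ∘ₗ casimir Λ ρ from congr($this z)
  refine TensorProduct.ext' fun x v => ?_
  simp [casimir_eq_sum ρ (ℛ k Λ), TensorProduct.smul_tmul', mul_assoc, Finset.smul_sum]

end Operator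

section Relations

variable {k H : Type} [Field k] [Ring H] [HopfAlgebra k H] {V : Type*} [AddCommGroup V]
  [Module k V] {A : Subalgebra k H} {Λ : H} {ρ : H →ₗ[k] Module.End k V}

/-- `ρ` restricts to an action of the subalgebra `A` on `V`; its values outside `A` are
irrelevant. Using maps defined on all of `H` lets the legs of `Δ(Λ)` act on `V`. -/
structure IsActionOn (A : Subalgebra k H) (ρ : H →ₗ[k] Module.End k V) : Prop where
  map_one : ρ 1 = 1
  map_mul : ∀ a ∈ A, ∀ b ∈ A, ρ (a * b) = ρ a * ρ b

lemma commute_casimir_map (hA : IsHopfSubalgebra k H A) (hΛ : Λ ∈ A) {T : Module.End k H}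
    {S : Module.End k V} (hT : ∀ a ∈ A, ∀ h, T (h * a) = T h * a)
    (hS : ∀ a ∈ A, ∀ v, S (ρ a v) = ρ a (S v)) :
    Commute (casimir Λ ρ) (TensorProduct.map T S) := by
  obtain ⟨r, hr⟩ := hA.1.exists_repr hΛ
  refine TensorProduct.ext' fun h v => ?_
  simp [casimir_eq_sum ρ r, fun i => hT _ (hr i).1, fun i => hS _ (hA.2 _ (hr i).2)]

lemma casimir_sub_mem (hA : IsHopfSubalgebra k H A) (hΛ : IsIdempotentIntegral k H A Λ)
    {R : Submodule k (H ⊗[k] V)} {h : H} {v : V}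
    (hR : ∀ a ∈ A, ∀ b ∈ A, (h * a * b) ⊗ₜ v - (h * a) ⊗ₜ ρ b v ∈ R) :
    casimir Λ ρ (h ⊗ₜ v) - h ⊗ₜ v ∈ R := by
  obtain ⟨r, hr⟩ := hA.1.exists_repr hΛ.1
  have hsum : ∑ i ∈ r.index, (h * r.left i * antipode k (r.right i)) ⊗ₜ[k] v = h ⊗ₜ v := by
    rw [← TensorProduct.sum_tmul]
    simp only [mul_assoc, ← Finset.mul_sum, sum_mul_antipode_eq_smul r, hΛ.2.1, one_smul, mul_one]
  rw [← neg_mem_iff, neg_sub, casimir_eq_sum ρ r, LinearMap.sum_apply]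
  nth_rw 1 [← hsum]
  rw [← Finset.sum_sub_distrib]
  exact R.sum_mem fun i _ => hR _ (hr i).1 _ (hA.2 _ (hr i).2)

variable [CharZero k] [IsAlgClosed k] [FiniteDimensional k H] [IsSemisimpleRing H]

lemma casimir_mul_tmul (hA : IsHopfSubalgebra k H A) (hΛ : IsIdempotentIntegral k H A Λ)
    (hρ : IsActionOn A ρ) (h : H) {a : H} (ha : a ∈ A) (v : V) :
    casimir Λ ρ ((h * a) ⊗ₜ v) = casimir Λ ρ (h ⊗ₜ ρ a v) := by
  obtain ⟨s, hs⟩ := hA.1.exists_repr (hA.2 a ha)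
  have hcomul : (a ⊗ₜ[k] 1) * comul Λ = (1 ⊗ₜ antipode k a) * comul Λ := by
    rw [← antipode_tmul_one_mul_comul s fun i _ => by
      rw [(hΛ.2.2 _ (hA.2 _ (hs i).2)).1, counit_antipode], antipode_antipode]
  obtain ⟨r, hr⟩ := hA.1.exists_repr hΛ.1
  calc casimir Λ ρ ((h * a) ⊗ₜ v)
      = TensorProduct.map (mulLeft k h) (ρ.flip v ∘ₗ antipode k) ((a ⊗ₜ 1) * comul Λ) := by
        simp [casimir_tmul, ← r.eq, Finset.mul_sum]
    _ = TensorProduct.map (mulLeft k h) (ρ.flip v ∘ₗ antipode k)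
          ((1 ⊗ₜ antipode k a) * comul Λ) := by rw [hcomul]
    _ = casimir Λ ρ (h ⊗ₜ ρ a v) := by
        simp [casimir_tmul, ← r.eq, Finset.mul_sum, antipode_mul_antidistrib,
          fun i => hρ.map_mul _ (hA.2 _ (hr i).2) a ha]

lemma isIdempotentElem_casimir (hA : IsHopfSubalgebra k H A)
    (hΛ : IsIdempotentIntegral k H A Λ) (hρ : IsActionOn A ρ) :
    IsIdempotentElem (casimir Λ ρ) := by
  refine TensorProduct.ext' fun h v => sub_eq_zero.1 ?_
  rw [Module.End.mul_apply, ← map_sub]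
  refine casimir_sub_mem hA hΛ (R := ker (casimir Λ ρ)) fun a _ b hb => ?_
  rw [mem_ker, map_sub, casimir_mul_tmul hA hΛ hρ _ hb, sub_self]

lemma commute_casimir_map_proj (hA : IsHopfSubalgebra k H A) (hΛ : Λ ∈ A) {X : Submodule k H}
    (hX : IsSubcoalgebra k H X) (hXA : X * A.toSubmodule ≤ X) :
    Commute (casimir Λ ρ) (TensorProduct.map hX.proj 1) :=
  commute_casimir_map hA hΛ
    (fun _ ha => hX.proj_mul_right (fun _ hx => hXA (Submodule.mul_mem_mul hx ha))
      fun _ hx => hXA (Submodule.mul_mem_mul hx (hA.2 _ ha))) fun _ _ _ => rfl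

end Relations

section Trace

variable {k H : Type} [Field k] [CharZero k] [IsAlgClosed k] [Ring H] [HopfAlgebra k H]
  [FiniteDimensional k H] [IsSemisimpleRing H] {A : Subalgebra k H} {X : Submodule k H} {Λ : H}

lemma sum_antipode_right_mul {x : H} {ι : Type*} (r : Repr k x ι) :
    ∑ i ∈ r.index, antipode k (r.right i) * r.left i = counit (R := k) x • 1 := by
  have h := congr(antipode k $(sum_antipode_mul_eq_smul r))
  simpa [antipode_mul_antidistrib] using h

lemma IsSubcoalgebra.trace_mulRight_comp_proj (hX : IsSubcoalgebra k H X) (a : H) :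
    trace k H (mulRight k a ∘ₗ hX.proj) =
      Module.finrank k X / Module.finrank k H * cointegral k H a := by
  have hcounit := hX.counit_dualCharacter
  rw [dualCharacter, map_smul, smul_eq_mul, ← hX.evalFst_localCounit] at hcounit
  rw [← hX.evalFst_localCounit, trace_comp_evalFst _ _ (ℛ k _)]
  simp only [mulRight_apply, ← mul_assoc]
  rw [← map_sum, ← Finset.sum_mul, sum_antipode_right_mul, smul_one_mul, map_smul, ← hcounit,
    smul_eq_mul, mul_div_cancel_left₀ _ finrank_ne_zero]

lemma IsIdempotentIntegral.finrank_mul_cointegral (hΛ : IsIdempotentIntegral k H A Λ)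
    (hA : IsHopfSubalgebra k H A) :
    Module.finrank k A * cointegral k H Λ = Module.finrank k H := by
  have h := hA.1.antipodeForm_dualCharacter A.one_mem
  rwa [← hΛ.smul_eq_dualCharacter hA, map_smul, antipodeForm_apply, antipode_one, one_mul,
    Bialgebra.counit_one, mul_one, smul_eq_mul] at h

lemma trace_casimir_mul_map {V : Type*} [AddCommGroup V] [Module k V] [FiniteDimensional k V]
    {ρ : H →ₗ[k] Module.End k V} (hA : IsHopfSubalgebra k H A)
    (hΛ : IsIdempotentIntegral k H A Λ) (hρ : ρ 1 = 1) (hX : IsSubcoalgebra k H X)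
    (Q : Module.End k V) :
    trace k _ (casimir Λ ρ * TensorProduct.map hX.proj Q) =
      Module.finrank k X / Module.finrank k A * trace k V Q := by
  let r := ℛ k Λ
  let c : k := Module.finrank k X / Module.finrank k H
  let τ : Module.Dual k H := trace k V ∘ₗ mulRight k Q ∘ₗ ρ ∘ₗ antipode k
  have hterm (i) : trace k _ (TensorProduct.map (mulRight k (r.left i))
      (ρ (antipode k (r.right i))) * TensorProduct.map hX.proj Q) =
        c * (cointegral k H (r.left i) * τ (r.right i)) := by
    rw [← TensorProduct.map_mul, trace_tensorProduct', Module.End.mul_eq_comp,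
      hX.trace_mulRight_comp_proj, mul_assoc]
    rfl
  have hn := hΛ.finrank_mul_cointegral hA
  have hn0 := finrank_ne_zero (k := k) (H := H)
  calc trace k _ (casimir Λ ρ * TensorProduct.map hX.proj Q)
      = c * ∑ i ∈ r.index, cointegral k H (r.left i) * τ (r.right i) := by
        rw [casimir_eq_sum ρ r, Finset.sum_mul, map_sum, Finset.mul_sum]
        exact Finset.sum_congr rfl fun i _ => hterm i
    _ = c * τ (evalFst (cointegral k H) Λ) := by simp [evalFst_eq_sum _ r]
    _ = c * (cointegral k H Λ * trace k V Q) := by simp [evalFst_cointegral, τ, hρ]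
    _ = Module.finrank k X / Module.finrank k A * trace k V Q := by
        rw [← hn] at hn0
        have := left_ne_zero_of_mul hn0
        have := right_ne_zero_of_mul hn0
        simp only [c, ← hn]
        field_simp

end Trace

end Casimir

section Induced

open Coalgebra HopfAlgebra LinearMap

section LinearAlgebra

variable {k U V W : Type*} [Field k] [AddCommGroup U] [Module k U] [AddCommGroup V] [Module k V]
  [AddCommGroup W] [Module k W]

lemma isIdempotentElem_map {P : Module.End k V} {Q : Module.End k W} (hP : IsIdempotentElem P)
    (hQ : IsIdempotentElem Q) : IsIdempotentElem (TensorProduct.map P Q) := by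
  rw [IsIdempotentElem, ← TensorProduct.map_mul, hP.eq, hQ.eq]

lemma finrank_map_eq_of_ker_eq [FiniteDimensional k W] {f : W →ₗ[k] U} {g : W →ₗ[k] V}
    (h : ker f = ker g) (N : Submodule k W) :
    Module.finrank k (N.map f) = Module.finrank k (N.map g) := by
  have hf := finrank_range_add_finrank_ker (f ∘ₗ N.subtype)
  have hg := finrank_range_add_finrank_ker (g ∘ₗ N.subtype)
  rw [ker_comp, range_comp, Submodule.range_subtype] at hf hg
  rw [h] at hf
  omega

lemma finrank_map_range_of_commute [FiniteDimensional k W] {P Q : Module.End k W}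
    (hP : IsIdempotentElem P) (hQ : IsIdempotentElem Q) (h : Commute P Q) :
    (Module.finrank k ((range Q).map P) : k) = trace k W (P * Q) := by
  rw [trace_eq_finrank_range (IsIdempotentElem.mul_of_commute h hP hQ), Module.End.mul_eq_comp,
    range_comp]

end LinearAlgebra

section Quotient

variable {k H : Type} [Field k] [Ring H] [HopfAlgebra k H] {K : Subalgebra k H} {M : Type*}
  [AddCommGroup M] [Module k M] [Module K M]

lemma mul_tmul_sub_mem_indRel (h : H) (a : K) (m : M) :
    (h * a) ⊗ₜ m - h ⊗ₜ (a • m) ∈ indRel k H K M := by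
  simpa [smul_sub, TensorProduct.smul_tmul'] using
    (indRel k H K M).smul_mem h (Submodule.subset_span ⟨a, m, rfl⟩)

variable (K M) in
/-- The quotient map from `H ⊗ M` onto the induced module `H ⊗_K M`, as a `k`-linear map. -/
def indMk : H ⊗[k] M →ₗ[k] Ind k H K M := (indRel k H K M).mkQ.restrictScalars k

lemma indMk_surjective : Function.Surjective (indMk K M) := (indRel k H K M).mkQ_surjective

end Quotient

variable {k H : Type} [Field k] [CharZero k] [IsAlgClosed k] [Ring H] [HopfAlgebra k H]
  [FiniteDimensional k H] [IsSemisimpleRing H] {K : Subalgebra k H} {Λ : H} {M : Type*}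
  [AddCommGroup M] [Module k M] [Module K M] [IsScalarTower k K M]

variable (M) in
/-- The action of a Hopf subalgebra `K` on a `K`-module, extended to `H` along the projection of
`H` onto `K`. -/
def IsHopfSubalgebra.act (hK : IsHopfSubalgebra k H K) : H →ₗ[k] Module.End k M :=
  (Algebra.lsmul k k M : K →ₐ[k] Module.End k M).toLinearMap ∘ₗ
    (hK.1.proj.codRestrict K.toSubmodule hK.1.proj_mem : H →ₗ[k] ↥K)

lemma IsHopfSubalgebra.act_apply (hK : IsHopfSubalgebra k H K) (a : K) (m : M) :
    hK.act M a m = a • m :=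
  have hproj : (⟨hK.1.proj a, hK.1.proj_mem a⟩ : K) = a := Subtype.ext (hK.1.proj_eq_self_iff.2 a.2)
  congr($hproj • m)

lemma IsHopfSubalgebra.isActionOn_act (hK : IsHopfSubalgebra k H K) :
    IsActionOn K (hK.act M) where
  map_one := LinearMap.ext fun m => (hK.act_apply 1 m).trans (one_smul _ m)
  map_mul a ha b hb := LinearMap.ext fun m => by
    lift a to K using ha
    lift b to K using hb
    rw [Module.End.mul_apply, hK.act_apply, hK.act_apply, ← mul_smul, ← hK.act_apply]
    rfl

lemma mem_indRel_iff (hK : IsHopfSubalgebra k H K) (hΛ : IsIdempotentIntegral k H K Λ)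
    {z : H ⊗[k] M} : z ∈ indRel k H K M ↔ casimir Λ (hK.act M) z = 0 := by
  constructor
  · intro hz
    induction hz using Submodule.span_induction with
    | mem z hz =>
      obtain ⟨a, m, rfl⟩ := hz
      rw [map_sub, ← one_mul (a : H), casimir_mul_tmul hK hΛ hK.isActionOn_act 1 a.2,
        hK.act_apply, sub_self]
    | zero => exact map_zero _
    | add x y _ _ hx hy => rw [map_add, hx, hy, add_zero]
    | smul h x _ hx => rw [casimir_smul, hx, smul_zero]
  · intro hz
    have hsub : casimir Λ (hK.act M) z - z ∈ (indRel k H K M).restrictScalars k := by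
      clear hz
      induction z with
      | zero => simp
      | tmul h m =>
        refine casimir_sub_mem hK hΛ fun a _ b hb => ?_
        rw [hK.act_apply ⟨b, hb⟩]
        exact mul_tmul_sub_mem_indRel (h * a) ⟨b, hb⟩ m
      | add x y hx hy =>
        rw [map_add, add_sub_add_comm]
        exact add_mem hx hy
    rwa [hz, zero_sub, neg_mem_iff] at hsub

lemma ker_indMk (hK : IsHopfSubalgebra k H K) (hΛ : IsIdempotentIntegral k H K Λ) :
    ker (indMk K M) = ker (casimir Λ (hK.act M)) := by
  ext z
  rw [mem_ker, mem_ker, ← mem_indRel_iff hK hΛ]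
  exact Submodule.Quotient.mk_eq_zero _

lemma finrank_map_indMk [FiniteDimensional k M] (hK : IsHopfSubalgebra k H K)
    (hΛ : IsIdempotentIntegral k H K Λ) {Y : Submodule k H} (hY : IsSubcoalgebra k H Y)
    (hYK : Y * K.toSubmodule ≤ Y) :
    Module.finrank k ((range (TensorProduct.map hY.proj (1 : Module.End k M))).map
      (indMk K M)) * Module.finrank k K = Module.finrank k Y * Module.finrank k M := by
  have htrace := finrank_map_range_of_commute
    (isIdempotentElem_casimir hK hΛ (hK.isActionOn_act (M := M)))
    (isIdempotentElem_map hY.isIdempotentElem_proj .one) (commute_casimir_map_proj hK hΛ.1 hY hYK)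
  rw [← finrank_map_eq_of_ker_eq (ker_indMk hK hΛ),
    trace_casimir_mul_map hK hΛ hK.isActionOn_act.map_one hY, trace_one, div_mul_eq_mul_div,
    eq_div_iff (finrank_subalgebra_ne_zero K)] at htrace
  exact_mod_cast htrace

lemma finrank_ind [FiniteDimensional k M] (hK : IsHopfSubalgebra k H K)
    (hΛ : IsIdempotentIntegral k H K Λ) :
    Module.finrank k (Ind k H K M) * Module.finrank k K =
      Module.finrank k H * Module.finrank k M := by
  have h := finrank_map_indMk (M := M) hK hΛ isSubcoalgebra_top le_top
  have hproj : (isSubcoalgebra_top (k := k) (H := H)).proj = 1 :=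
    LinearMap.ext fun _ => isSubcoalgebra_top.proj_eq_self_iff.2 trivial
  rwa [hproj, TensorProduct.map_one, Module.End.one_eq_id, range_id, Submodule.map_top,
    range_eq_top.2 indMk_surjective, finrank_top, finrank_top] at h

end Induced

section Component

open Coalgebra HopfAlgebra LinearMap

section Operator

variable {k H : Type} [Field k] [Ring H] [HopfAlgebra k H] (M : Type*) [AddCommGroup M]
  [Module k M]

/-- The action of `H` on `H ⊗ M` by left multiplication on the first factor. -/
def tensorAct : H →ₗ[k] Module.End k (H ⊗[k] M) :=
  (Algebra.lsmul k k (H ⊗[k] M) : H →ₐ[k] Module.End k (H ⊗[k] M)).toLinearMap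

lemma tensorAct_apply (h : H) (z : H ⊗[k] M) : tensorAct M h z = h • z := rfl

lemma isActionOn_tensorAct (A : Subalgebra k H) : IsActionOn A (tensorAct M) where
  map_one := map_one (Algebra.lsmul k k (H ⊗[k] M))
  map_mul a _ b _ := map_mul (Algebra.lsmul k k (H ⊗[k] M)) a b

variable {M}

/-- The composite of the Casimir operators of the two tensor products in `H ⊗_A (H ⊗_K M)`, where
`Λ'` and `Λ` are the idempotent integrals of `A` and `K`, and `ρ` is the action of `K` on `M`. -/
def doubleCasimir (Λ' Λ : H) (ρ : H →ₗ[k] Module.End k M) : Module.End k (H ⊗[k] (H ⊗[k] M)) :=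
  casimir Λ' (tensorAct M) * TensorProduct.map 1 (casimir Λ ρ)

variable {A K : Subalgebra k H} {Λ' Λ : H} {ρ : H →ₗ[k] Module.End k M}

lemma commute_casimir_tensorAct (hA : IsHopfSubalgebra k H A) (hΛ' : Λ' ∈ A) :
    Commute (casimir Λ' (tensorAct M)) (TensorProduct.map 1 (casimir Λ ρ)) :=
  commute_casimir_map hA hΛ' (fun _ _ _ => rfl) fun b _ => casimir_smul ρ b

variable [CharZero k] [IsAlgClosed k] [FiniteDimensional k H] [IsSemisimpleRing H]

lemma isIdempotentElem_doubleCasimir (hA : IsHopfSubalgebra k H A)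
    (hΛ' : IsIdempotentIntegral k H A Λ') (hK : IsHopfSubalgebra k H K)
    (hΛ : IsIdempotentIntegral k H K Λ) (hρ : IsActionOn K ρ) :
    IsIdempotentElem (doubleCasimir Λ' Λ ρ) :=
  IsIdempotentElem.mul_of_commute (commute_casimir_tensorAct hA hΛ'.1)
    (isIdempotentElem_casimir hA hΛ' (isActionOn_tensorAct M A))
    (isIdempotentElem_map .one (isIdempotentElem_casimir hK hΛ hρ))

variable {X Y : Submodule k H}

lemma commute_doubleCasimir_map_proj (hA : IsHopfSubalgebra k H A) (hΛ' : Λ' ∈ A)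
    (hK : IsHopfSubalgebra k H K) (hΛ : Λ ∈ K) (hX : IsSubcoalgebra k H X)
    (hY : IsSubcoalgebra k H Y) (hXA : X * A.toSubmodule ≤ X) (hAY : A.toSubmodule * Y ≤ Y)
    (hYK : Y * K.toSubmodule ≤ Y) :
    Commute (doubleCasimir Λ' Λ ρ) (TensorProduct.map hX.proj (TensorProduct.map hY.proj 1)) := by
  refine Commute.mul_left (commute_casimir_map hA hΛ' (fun _ ha => ?_) fun b hb => ?_) ?_
  · exact hX.proj_mul_right (fun _ hx => hXA (Submodule.mul_mem_mul hx ha))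
      fun _ hx => hXA (Submodule.mul_mem_mul hx (hA.2 _ ha))
  · suffices TensorProduct.map hY.proj 1 ∘ₗ tensorAct M b =
        tensorAct M b ∘ₗ TensorProduct.map hY.proj 1 from fun v => congr($this v)
    refine TensorProduct.ext' fun x m => ?_
    simp [tensorAct_apply, TensorProduct.smul_tmul',
      hY.proj_mul_left (fun _ hy => hAY (Submodule.mul_mem_mul hb hy))
        fun _ hy => hAY (Submodule.mul_mem_mul (hA.2 b hb) hy)]
  · rw [Commute, SemiconjBy, ← TensorProduct.map_mul, ← TensorProduct.map_mul,
      (commute_casimir_map_proj hK hΛ hY hYK).eq, one_mul, mul_one]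

lemma trace_doubleCasimir_mul_map_proj [FiniteDimensional k M] (hA : IsHopfSubalgebra k H A)
    (hΛ' : IsIdempotentIntegral k H A Λ') (hK : IsHopfSubalgebra k H K)
    (hΛ : IsIdempotentIntegral k H K Λ) (hρ : ρ 1 = 1) (hX : IsSubcoalgebra k H X)
    (hY : IsSubcoalgebra k H Y) :
    trace k _ (doubleCasimir Λ' Λ ρ * TensorProduct.map hX.proj (TensorProduct.map hY.proj 1)) =
      Module.finrank k X / Module.finrank k A *
        (Module.finrank k Y / Module.finrank k K * Module.finrank k M) := by
  rw [doubleCasimir, mul_assoc, ← TensorProduct.map_mul, one_mul,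
    trace_casimir_mul_map hA hΛ' (isActionOn_tensorAct M A).map_one,
    trace_casimir_mul_map hK hΛ hρ, trace_one]

end Operator

section Inclusion

variable {k H : Type} [Field k] [Ring H] [HopfAlgebra k H] {L K : Subalgebra k H}
  {C : Submodule k H} {M : Type*} [AddCommGroup M] [Module k M]

variable (L K C M) in
/-- The inclusion of `L ⊗ (CK ⊗ M)` into `H ⊗ (H ⊗ M)`. -/
def lcmIncl : LCM k H L K C M →ₗ[k] H ⊗[k] (H ⊗[k] M) :=
  (TensorProduct.map L.toSubmodule.subtype
    (TensorProduct.map (CKsub k H K C).subtype LinearMap.id) :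
      L.toSubmodule ⊗[k] (CKsub k H K C ⊗[k] M) →ₗ[k] H ⊗[k] (H ⊗[k] M))

lemma lcmIncl_mk (l : L) (x : CKsub k H K C) (m : M) :
    lcmIncl L K C M (lcmk k H L K C M l (ckmk k H K M C x m)) = (l : H) ⊗ₜ ((x : H) ⊗ₜ m) := rfl

lemma lcmIncl_injective : Function.Injective (lcmIncl L K C M) :=
  TensorProduct.map_injective_of_flat_flat _ _ Subtype.val_injective <|
    TensorProduct.map_injective_of_flat_flat _ _ Subtype.val_injective Function.injective_id

lemma mem_of_lcmk_mem {p : Submodule k (LCM k H L K C M)}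
    (h : ∀ l x m, lcmk k H L K C M l (ckmk k H K M C x m) ∈ p) (w : LCM k H L K C M) : w ∈ p := by
  have hmkQ : (p.mkQ : L ⊗[k] (CKsub k H K C ⊗[k] M) →ₗ[k] _) = 0 :=
    TensorProduct.ext <| LinearMap.ext fun l => TensorProduct.ext' fun x m =>
      (Submodule.Quotient.mk_eq_zero p).2 (h l x m)
  exact (Submodule.Quotient.mk_eq_zero p).1 congr($hmkQ w)

variable [Module K M] {L' : Subalgebra k H} {Λ Λ' : H}

lemma casimir_lcmIncl_sub_mem (hL' : IsHopfSubalgebra k H L')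
    (hΛ' : IsIdempotentIntegral k H L' Λ')
    (h : L'.toSubmodule ≤ L.toSubmodule ⊓ conjK k H K Λ C)
    (hCK : L'.toSubmodule * (C * K.toSubmodule) ≤ C * K.toSubmodule) (w : LCM k H L K C M) :
    casimir Λ' (tensorAct M) (lcmIncl L K C M w) - lcmIncl L K C M w ∈
      (compRel k H L K Λ C M).map (lcmIncl L K C M) := by
  refine mem_of_lcmk_mem (p := ((compRel k H L K Λ C M).map (lcmIncl L K C M)).comap
    ((casimir Λ' (tensorAct M) - 1) ∘ₗ lcmIncl L K C M)) (fun l x m => ?_) w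
  rw [Submodule.mem_comap, comp_apply, lcmIncl_mk, LinearMap.sub_apply, Module.End.one_apply]
  refine casimir_sub_mem hL' hΛ' fun a ha b hb => ?_
  exact ⟨_, Submodule.subset_span (Or.inl ⟨⟨l * a, mul_mem l.2 (h ha).1⟩, b, (h hb).1, (h hb).2,
    x, m, hCK (Submodule.mul_mem_mul hb x.2), rfl⟩), map_sub _ _ _⟩

end Inclusion

section Relations

variable {k H : Type} [Field k] [CharZero k] [IsAlgClosed k] [Ring H] [HopfAlgebra k H]
  [FiniteDimensional k H] [IsSemisimpleRing H] {L K L' : Subalgebra k H} {C : Submodule k H}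
  {Λ Λ' : H} {M : Type*} [AddCommGroup M] [Module k M]

lemma range_lcmIncl (hL : IsSubcoalgebra k H L.toSubmodule)
    (hCK : IsSubcoalgebra k H (C * K.toSubmodule)) :
    range (lcmIncl L K C M) =
      range (TensorProduct.map hL.proj (TensorProduct.map hCK.proj (1 : Module.End k M))) := by
  refine (TensorProduct.range_map L.toSubmodule.subtype
    (TensorProduct.map (CKsub k H K C).subtype .id)).trans ?_
  rw [TensorProduct.range_map, TensorProduct.range_map, TensorProduct.range_map,
    Submodule.range_subtype, Submodule.range_subtype, IsSubcoalgebra.proj, IsSubcoalgebra.proj,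
    Submodule.range_projection, Submodule.range_projection]
  rfl

instance [FiniteDimensional k M] : FiniteDimensional k (LCM k H L K C M) :=
  inferInstanceAs (FiniteDimensional k (L ⊗[k] (CKsub k H K C ⊗[k] M)))

variable [Module K M] [IsScalarTower k K M]

lemma compRel_le_ker (hL' : IsHopfSubalgebra k H L') (hΛ' : IsIdempotentIntegral k H L' Λ')
    (hK : IsHopfSubalgebra k H K) (hΛ : IsIdempotentIntegral k H K Λ)
    (h : L.toSubmodule ⊓ conjK k H K Λ C ≤ L'.toSubmodule) :
    compRel k H L K Λ C M ≤ ker (doubleCasimir Λ' Λ (hK.act M) ∘ₗ lcmIncl L K C M) := by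
  refine Submodule.span_le.2 ?_
  rintro _ (⟨l, a, haL, haC, x, m, hax, rfl⟩ | ⟨l, x, a, m, hxa, rfl⟩)
  · rw [SetLike.mem_coe, mem_ker, comp_apply, map_sub, lcmIncl_mk, lcmIncl_mk, doubleCasimir,
      (commute_casimir_tensorAct hL' hΛ'.1).eq, Module.End.mul_apply, map_sub,
      casimir_mul_tmul hL' hΛ' (isActionOn_tensorAct M L') _ (h ⟨haL, haC⟩), tensorAct_apply,
      TensorProduct.smul_tmul', smul_eq_mul, sub_self, map_zero]
  · rw [SetLike.mem_coe, mem_ker, comp_apply, map_sub, lcmIncl_mk, lcmIncl_mk, doubleCasimir,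
      Module.End.mul_apply, map_sub, TensorProduct.map_tmul, TensorProduct.map_tmul,
      casimir_mul_tmul hK hΛ hK.isActionOn_act _ a.2, hK.act_apply, sub_self, map_zero]

lemma map_casimir_lcmIncl_sub_mem (hK : IsHopfSubalgebra k H K)
    (hΛ : IsIdempotentIntegral k H K Λ) (w : LCM k H L K C M) :
    TensorProduct.map 1 (casimir Λ (hK.act M)) (lcmIncl L K C M w) - lcmIncl L K C M w ∈
      (compRel k H L K Λ C M).map (lcmIncl L K C M) := by
  have hCK {y : H} (hy : y ∈ CKsub k H K C) {a : H} (ha : a ∈ K) : y * a ∈ CKsub k H K C := by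
    have hmul := Submodule.mul_mem_mul hy (K.mem_toSubmodule.2 ha)
    rwa [CKsub, mul_assoc, toSubmodule_mul_self] at hmul
  refine mem_of_lcmk_mem (p := ((compRel k H L K Λ C M).map (lcmIncl L K C M)).comap
    ((TensorProduct.map 1 (casimir Λ (hK.act M)) - 1) ∘ₗ lcmIncl L K C M)) (fun l x m => ?_) w
  rw [Submodule.mem_comap, comp_apply, lcmIncl_mk, LinearMap.sub_apply, TensorProduct.map_tmul,
    Module.End.one_apply, Module.End.one_apply, ← TensorProduct.tmul_sub]
  refine casimir_sub_mem hK hΛ (R := ((compRel k H L K Λ C M).map (lcmIncl L K C M)).comap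
    (TensorProduct.mk k H (H ⊗[k] M) l)) fun a ha b hb => ?_
  refine ⟨_, Submodule.subset_span (Or.inr ⟨l, ⟨x * a, hCK x.2 ha⟩, ⟨b, hb⟩, m,
    hCK (hCK x.2 ha) hb, rfl⟩), ?_⟩
  rw [map_sub, lcmIncl_mk, lcmIncl_mk, hK.act_apply ⟨b, hb⟩, map_sub]
  rfl

lemma compRel_eq_ker (hL' : IsHopfSubalgebra k H L') (hΛ' : IsIdempotentIntegral k H L' Λ')
    (hK : IsHopfSubalgebra k H K) (hΛ : IsIdempotentIntegral k H K Λ)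
    (h : L'.toSubmodule = L.toSubmodule ⊓ conjK k H K Λ C)
    (hCK : L'.toSubmodule * (C * K.toSubmodule) ≤ C * K.toSubmodule) :
    compRel k H L K Λ C M = ker (doubleCasimir Λ' Λ (hK.act M) ∘ₗ lcmIncl L K C M) := by
  refine (compRel_le_ker hL' hΛ' hK hΛ h.ge).antisymm fun w hw => ?_
  obtain ⟨r, hr, hrw⟩ := map_casimir_lcmIncl_sub_mem (L := L) (C := C) hK hΛ w
  have hsub := casimir_lcmIncl_sub_mem hL' hΛ' h.le hCK (w + r)
  rw [map_add, hrw, add_sub_cancel, ← Module.End.mul_apply, ← doubleCasimir,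
    show doubleCasimir Λ' Λ (hK.act M) (lcmIncl L K C M w) = 0 from hw, zero_sub, neg_mem_iff,
    ← sub_add_cancel (TensorProduct.map 1 _ _) (lcmIncl L K C M w), ← hrw, ← map_add] at hsub
  obtain ⟨s, hs, hsr⟩ := hsub
  rw [lcmIncl_injective hsr] at hs
  exact ((compRel k H L K Λ C M).add_mem_iff_right hr).1 hs

lemma finrank_comp_mul_finrank [FiniteDimensional k M] (hL : IsHopfSubalgebra k H L)
    (hK : IsHopfSubalgebra k H K) (hΛ : IsIdempotentIntegral k H K Λ)
    (hC : IsSimpleSubcoalgebra k H C) :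
    Module.finrank k (Comp k H L K Λ C M) *
        (Module.finrank k ↥(L.toSubmodule ⊓ conjK k H K Λ C) * Module.finrank k K) =
      Module.finrank k L * Module.finrank k (CKsub k H K C) * Module.finrank k M := by
  obtain ⟨L', hL', h⟩ := exists_isHopfSubalgebra_eq_inf_conjK hL hK hΛ hC
  obtain ⟨Λ', hΛ'⟩ := hL'.exists_isIdempotentIntegral
  have hCK := hC.1.mul hK.1
  have hL'CK := (le_conjK_iff hK hΛ hC hL'.1).1 (h.trans_le inf_le_right)
  have hquot : Module.finrank k (Comp k H L K Λ C M) = Module.finrank k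
      ((range (lcmIncl L K C M)).map (doubleCasimir Λ' Λ (hK.act M))) := by
    rw [← range_comp, ← (quotKerEquivRange _).finrank_eq,
      ← compRel_eq_ker hL' hΛ' hK hΛ h hL'CK]
  have hLL' : L.toSubmodule * L'.toSubmodule ≤ L.toSubmodule :=
    (mul_le_mul_right (h.trans_le inf_le_left) _).trans (toSubmodule_mul_self L).le
  have hCKK : C * K.toSubmodule * K.toSubmodule ≤ C * K.toSubmodule := by
    rw [mul_assoc, toSubmodule_mul_self]
  have htrace := finrank_map_range_of_commute
    (isIdempotentElem_doubleCasimir hL' hΛ' hK hΛ (hK.isActionOn_act (M := M)))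
    (isIdempotentElem_map hL.1.isIdempotentElem_proj
      (isIdempotentElem_map hCK.isIdempotentElem_proj .one))
    (commute_doubleCasimir_map_proj hL' hΛ'.1 hK hΛ.1 hL.1 hCK
      hLL' hL'CK hCKK)
  rw [← range_lcmIncl, ← hquot, trace_doubleCasimir_mul_map_proj hL' hΛ' hK hΛ
    hK.isActionOn_act.map_one] at htrace
  have hL'0 := finrank_subalgebra_ne_zero (k := k) L'
  have hK0 := finrank_subalgebra_ne_zero (k := k) K
  field_simp at htrace
  norm_cast at htrace
  rw [← h, ← mul_assoc]
  exact htrace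

end Relations

end Component

section Cosets

variable {k H : Type} [Field k] [Ring H] [HopfAlgebra k H] {L K : Subalgebra k H}

lemma IsSimpleSubcoalgebra.exists_isDoubleCosetReps {C : Submodule k H}
    (hC : IsSimpleSubcoalgebra k H C) :
    ∃ (ι : Type) (rep : ι → Submodule k H) (j : ι),
      IsDoubleCosetReps k H L K rep ∧ rep j = C := by
  classical
  let coset (D : Submodule k H) : Submodule k H := L.toSubmodule * D * K.toSubmodule
  let ι : Type := {A : Submodule k H // ∃ D, IsSimpleSubcoalgebra k H D ∧ A = coset D}
  let j : ι := ⟨coset C, C, hC, rfl⟩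
  let rep : ι → Submodule k H := Function.update (fun i => i.2.choose) j C
  have hrep : ∀ i, IsSimpleSubcoalgebra k H (rep i) ∧ i.1 = coset (rep i) :=
    (Function.forall_update_iff _ fun (i : ι) D => IsSimpleSubcoalgebra k H D ∧ i.1 = coset D).2
      ⟨⟨hC, rfl⟩, fun i _ => i.2.choose_spec⟩
  refine ⟨ι, rep, j, ⟨fun i => (hrep i).1, fun i i' h => Subtype.ext ?_, fun D hD => ?_⟩,
    Function.update_self _ _ _⟩
  · exact (hrep i).2.trans (h.trans (hrep i').2.symm)
  · exact ⟨⟨coset D, D, hD, rfl⟩, (le_doubleCoset D L K).trans (hrep ⟨coset D, D, hD, rfl⟩).2.le⟩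

variable [CharZero k] [IsAlgClosed k] [FiniteDimensional k H] [IsSemisimpleRing H] {ι : Type}
  {rep : ι → Submodule k H}

lemma IsDoubleCosetReps.iSup_eq_top (hrep : IsDoubleCosetReps k H L K rep) :
    ⨆ i, L.toSubmodule * rep i * K.toSubmodule = ⊤ := by
  rw [eq_top_iff, ← isSubcoalgebra_top.iSup_simple_eq]
  exact iSup_le fun E => let ⟨i, hi⟩ := hrep.2.2 E.1 E.2.1; hi.trans (le_iSup_iff.2 fun _ h => h i)

lemma IsDoubleCosetReps.iSupIndep (hrep : IsDoubleCosetReps k H L K rep)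
    (hL : IsHopfSubalgebra k H L) (hK : IsHopfSubalgebra k H K) :
    iSupIndep fun i => L.toSubmodule * rep i * K.toSubmodule :=
  iSupIndep_of_le_perp (fun i => (hrep.1 i).1.doubleCoset hL hK) fun i j hij =>
    doubleCoset_le_perp_of_ne hL hK (hrep.1 i) (hrep.1 j) fun h => hij (hrep.2.1 i j h)

lemma IsDoubleCosetReps.finite (hrep : IsDoubleCosetReps k H L K rep)
    (hL : IsHopfSubalgebra k H L) (hK : IsHopfSubalgebra k H K) : Finite ι :=
  WellFoundedGT.finite_of_iSupIndep (hrep.iSupIndep hL hK) fun i hi =>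
    (hrep.1 i).2.1 (le_bot_iff.1 (hi ▸ le_doubleCoset (rep i) L K))

lemma IsDoubleCosetReps.sum_finrank [Fintype ι] (hrep : IsDoubleCosetReps k H L K rep)
    (hL : IsHopfSubalgebra k H L) (hK : IsHopfSubalgebra k H K) :
    ∑ i, Module.finrank k ↥(L.toSubmodule * rep i * K.toSubmodule) = Module.finrank k H := by
  classical
  rw [← Module.finrank_directSum]
  exact (LinearEquiv.ofBijective (DirectSum.coeLinearMap _)
    (DirectSum.isInternal_submodule_of_iSupIndep_of_iSup_eq_top (hrep.iSupIndep hL hK)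
      hrep.iSup_eq_top)).finrank_eq

end Cosets

section Mackey

open LinearMap

section Multiplication

variable {k H : Type} [Field k] [Ring H] [HopfAlgebra k H] {L K : Subalgebra k H} {Λ : H}
  {C : Submodule k H} {M : Type*} [AddCommGroup M] [Module k M] [Module K M]

variable (L K C M) in
/-- Left multiplication `L ⊗ (CK ⊗ M) → H ⊗_K M`. -/
def lcmMul : LCM k H L K C M →ₗ[k] Ind k H K M :=
  indMk K M ∘ₗ TensorProduct.lift (tensorAct M) ∘ₗ lcmIncl L K C M

lemma lcmMul_mk (l : L) (x : CKsub k H K C) (m : M) :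
    lcmMul L K C M (lcmk k H L K C M l (ckmk k H K M C x m)) =
      indMk K M (((l : H) * (x : H)) ⊗ₜ m) := rfl

lemma compRel_le_ker_lcmMul : compRel k H L K Λ C M ≤ ker (lcmMul L K C M) := by
  refine Submodule.span_le.2 ?_
  rintro _ (⟨l, a, haL, -, x, m, hax, rfl⟩ | ⟨l, x, a, m, hxa, rfl⟩)
  · rw [SetLike.mem_coe, mem_ker, map_sub, lcmMul_mk, lcmMul_mk, mul_assoc, sub_self]
  · rw [SetLike.mem_coe, mem_ker, map_sub, lcmMul_mk, lcmMul_mk, ← map_sub, ← mul_assoc]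
    exact (Submodule.Quotient.mk_eq_zero _).2 (mul_tmul_sub_mem_indRel _ a m)

variable (L K Λ C M) in
/-- Left multiplication `L ⊗_{L ∩ ᶜK} ᶜM → H ⊗_K M`, the component of `π_M` at `C`. -/
def compMul : Comp k H L K Λ C M →ₗ[k] Ind k H K M :=
  (compRel k H L K Λ C M).liftQ (lcmMul L K C M) compRel_le_ker_lcmMul

lemma range_compMul : range (compMul L K Λ C M) = range (lcmMul L K C M) :=
  Submodule.range_liftQ _ _ _

lemma indMk_tmul_mem_range {y : H} (hy : y ∈ L.toSubmodule * C * K.toSubmodule) (m : M) :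
    indMk K M (y ⊗ₜ m) ∈ range (lcmMul L K C M) := by
  have hle : L.toSubmodule * (C * K.toSubmodule) ≤
      (range (lcmMul L K C M)).comap (indMk K M ∘ₗ (TensorProduct.mk k H M).flip m) :=
    Submodule.mul_le.2 fun l hl x hx =>
      ⟨lcmk k H L K C M ⟨l, hl⟩ (ckmk k H K M C ⟨x, hx⟩ m), lcmMul_mk _ _ _⟩
  exact hle (mul_assoc L.toSubmodule C _ ▸ hy)

variable {ι : Type} [DecidableEq ι] {rep : ι → Submodule k H}

variable (L K Λ M rep) in
/-- The left-multiplication map `π_M` of a system of double coset representatives. -/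
def mackeyMap : (⨁ i, Comp k H L K Λ (rep i) M) →ₗ[k] Ind k H K M :=
  DirectSum.toModule k ι _ fun i => compMul L K Λ (rep i) M

lemma mackeyMap_of (i : ι) (y : Comp k H L K Λ (rep i) M) :
    mackeyMap L K Λ M rep (DirectSum.of (fun i => Comp k H L K Λ (rep i) M) i y) =
      compMul L K Λ (rep i) M y :=
  DirectSum.toModule_lof (M := fun i => Comp k H L K Λ (rep i) M) k i y

lemma eq_mackeyMap {π : (⨁ i, Comp k H L K Λ (rep i) M) →ₗ[k] Ind k H K M}
    (hπ : ∀ i (l : L) (x : CKsub k H K (rep i)) (m : M),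
      π (DirectSum.of (fun i => Comp k H L K Λ (rep i) M) i
        (Submodule.Quotient.mk (lcmk k H L K (rep i) M l (ckmk k H K M (rep i) x m)))) =
          Submodule.Quotient.mk (((l : H) * (x : H)) ⊗ₜ[k] m)) : π = mackeyMap L K Λ M rep := by
  refine DirectSum.linearMap_ext (M := fun i => Comp k H L K Λ (rep i) M) k fun i =>
    Submodule.linearMap_qext _ <| LinearMap.ext <| mem_of_lcmk_mem
      (p := eqLocus (π ∘ₗ DirectSum.lof k ι _ i ∘ₗ Submodule.mkQ _) _) fun l x m => ?_
  exact (hπ i l x m).trans (mackeyMap_of (L := L) (K := K) (Λ := Λ) (M := M) (rep := rep) i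
    (Submodule.Quotient.mk (lcmk k H L K (rep i) M l (ckmk k H K M (rep i) x m)))).symm

end Multiplication

lemma mackeyAt_iff {k H : Type} [Field k] [Ring H] [HopfAlgebra k H] {L K : Subalgebra k H} {Λ : H}
    {M : Type v} [AddCommGroup M] [Module k M] [Module K M] [IsScalarTower k K M]
    [FiniteDimensional k M] :
    MackeyAt k H L K Λ M ↔ ∀ (ι : Type) [DecidableEq ι] (rep : ι → Submodule k H),
      IsDoubleCosetReps k H L K rep → Function.Bijective (mackeyMap L K Λ M rep) := by
  refine forall₄_congr fun ι _ rep _ => ⟨?_, fun h => ⟨_, h, fun i l x m => mackeyMap_of i _⟩⟩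
  rintro ⟨π, hπ, hmk⟩
  exact eq_mackeyMap hmk ▸ hπ

variable {k H : Type} [Field k] [CharZero k] [IsAlgClosed k] [Ring H] [HopfAlgebra k H]
  [FiniteDimensional k H] [IsSemisimpleRing H] {L K : Subalgebra k H} {Λ : H}
  {C : Submodule k H} {M : Type*} [AddCommGroup M] [Module k M] [Module K M]

lemma range_lcmMul (hY : IsSubcoalgebra k H (L.toSubmodule * C * K.toSubmodule)) :
    range (lcmMul L K C M) =
      (range (TensorProduct.map hY.proj (1 : Module.End k M))).map (indMk K M) := by
  apply le_antisymm
  · refine range_le_iff_comap.2 (eq_top_iff.2 fun w _ => mem_of_lcmk_mem (fun l x m => ?_) w)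
    have hlx : (l : H) * x ∈ L.toSubmodule * C * K.toSubmodule := by
      rw [mul_assoc]
      exact Submodule.mul_mem_mul l.2 x.2
    refine ⟨((l : H) * x) ⊗ₜ m, ⟨((l : H) * x) ⊗ₜ m, ?_⟩, lcmMul_mk l x m⟩
    rw [TensorProduct.map_tmul, hY.proj_eq_self_iff.2 hlx, Module.End.one_apply]
  · rw [TensorProduct.range_map, Submodule.map_le_iff_le_comap, Submodule.map₂_le]
    rintro _ ⟨h, rfl⟩ m -
    exact indMk_tmul_mem_range (hY.proj_mem h) m

lemma mackeyMap_surjective {ι : Type} [DecidableEq ι] {rep : ι → Submodule k H}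
    (hrep : IsDoubleCosetReps k H L K rep) : Function.Surjective (mackeyMap L K Λ M rep) := by
  have htmul (m : M) : ⨆ i, L.toSubmodule * rep i * K.toSubmodule ≤
      (range (mackeyMap L K Λ M rep)).comap (indMk K M ∘ₗ (TensorProduct.mk k H M).flip m) :=
    iSup_le fun i h hh => by
      obtain ⟨y, hy⟩ := (range_compMul (Λ := Λ)).ge (indMk_tmul_mem_range hh m)
      exact ⟨_, (mackeyMap_of i y).trans hy⟩
  rw [hrep.iSup_eq_top] at htmul
  have hle : ⊤ ≤ (range (mackeyMap L K Λ M rep)).comap (indMk K M) := by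
    rw [← TensorProduct.map₂_mk_top_top_eq_top, Submodule.map₂_le]
    exact fun h _ m _ => htmul m trivial
  intro y
  obtain ⟨z, rfl⟩ := indMk_surjective y
  exact hle trivial

variable [IsScalarTower k K M]

lemma finrank_range_compMul [FiniteDimensional k M] (hL : IsHopfSubalgebra k H L)
    (hK : IsHopfSubalgebra k H K) (hΛ : IsIdempotentIntegral k H K Λ)
    (hC : IsSubcoalgebra k H C) :
    Module.finrank k (range (compMul L K Λ C M)) * Module.finrank k K =
      Module.finrank k ↥(L.toSubmodule * C * K.toSubmodule) * Module.finrank k M := by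
  rw [range_compMul, range_lcmMul (hC.doubleCoset hL hK)]
  exact finrank_map_indMk hK hΛ _ (doubleCoset_mul_toSubmodule C L K).le

lemma finrank_inf_conjK_pos (hL : IsHopfSubalgebra k H L) (hK : IsHopfSubalgebra k H K)
    (hΛ : IsIdempotentIntegral k H K Λ) (hC : IsSimpleSubcoalgebra k H C) :
    0 < Module.finrank k ↥(L.toSubmodule ⊓ conjK k H K Λ C) := by
  obtain ⟨L', -, h⟩ := exists_isHopfSubalgebra_eq_inf_conjK hL hK hΛ hC
  rw [← h, Nat.pos_iff_ne_zero]
  exact_mod_cast finrank_subalgebra_ne_zero (k := k) L'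

lemma mackeyAt_of_finrank {M : Type v} [AddCommGroup M] [Module k M] [Module K M]
    [IsScalarTower k K M] [FiniteDimensional k M] (hL : IsHopfSubalgebra k H L)
    (hK : IsHopfSubalgebra k H K) (hΛ : IsIdempotentIntegral k H K Λ)
    (hdim : ∀ C : Submodule k H, IsSimpleSubcoalgebra k H C →
      Module.finrank k ↥(L.toSubmodule * C * K.toSubmodule) *
          Module.finrank k ↥(L.toSubmodule ⊓ conjK k H K Λ C) =
        Module.finrank k L * Module.finrank k (CKsub k H K C)) :
    MackeyAt k H L K Λ M := by
  refine mackeyAt_iff.2 fun ι _ rep hrep => ?_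
  have hcomp : ∀ i, Module.finrank k (Comp k H L K Λ (rep i) M) * Module.finrank k K =
      Module.finrank k ↥(L.toSubmodule * rep i * K.toSubmodule) * Module.finrank k M := fun i => by
    have h := finrank_comp_mul_finrank (M := M) hL hK hΛ (hrep.1 i)
    rw [← hdim _ (hrep.1 i)] at h
    refine Nat.eq_of_mul_eq_mul_left (finrank_inf_conjK_pos hL hK hΛ (hrep.1 i)) ?_
    linarith
  have := hrep.finite hL hK
  have := Fintype.ofFinite ι
  have hK0 : 0 < Module.finrank k K :=
    Nat.pos_of_ne_zero (mod_cast finrank_subalgebra_ne_zero (k := k) K)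
  have hfinrank : Module.finrank k (⨁ i, Comp k H L K Λ (rep i) M) =
      Module.finrank k (Ind k H K M) := by
    refine Nat.eq_of_mul_eq_mul_right hK0 ?_
    rw [Module.finrank_directSum, Finset.sum_mul, Finset.sum_congr rfl fun i _ => hcomp i,
      ← Finset.sum_mul, hrep.sum_finrank hL hK, finrank_ind hK hΛ]
  have : FiniteDimensional k (Ind k H K M) := .of_surjective (indMk K M) indMk_surjective
  have hsurj := mackeyMap_surjective (M := M) (Λ := Λ) hrep
  exact ⟨(injective_iff_surjective_of_finrank_eq_finrank hfinrank).2 hsurj, hsurj⟩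

lemma MackeyAt.finrank_eq {M : Type v} [AddCommGroup M] [Module k M] [Module K M]
    [IsScalarTower k K M] [FiniteDimensional k M] [Nontrivial M] (hM : MackeyAt k H L K Λ M)
    (hL : IsHopfSubalgebra k H L) (hK : IsHopfSubalgebra k H K)
    (hΛ : IsIdempotentIntegral k H K Λ) (hC : IsSimpleSubcoalgebra k H C) :
    Module.finrank k ↥(L.toSubmodule * C * K.toSubmodule) *
        Module.finrank k ↥(L.toSubmodule ⊓ conjK k H K Λ C) =
      Module.finrank k L * Module.finrank k (CKsub k H K C) := by
  classical
  obtain ⟨ι, rep, j, hrep, rfl⟩ := hC.exists_isDoubleCosetReps (L := L) (K := K)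
  have hinj : Function.Injective (compMul L K Λ (rep j) M) := fun x y hxy => by
    rw [← mackeyMap_of, ← mackeyMap_of] at hxy
    exact DirectSum.of_injective (β := fun i => Comp k H L K Λ (rep i) M) j
      ((mackeyAt_iff.1 hM ι rep hrep).1 hxy)
  have hrange := finrank_range_compMul (M := M) hL hK hΛ hC.1
  rw [finrank_range_of_inj hinj] at hrange
  have hcomp := finrank_comp_mul_finrank (M := M) hL hK hΛ hC
  refine Nat.eq_of_mul_eq_mul_right (Module.finrank_pos (R := k) (M := M)) ?_
  rw [← hcomp, mul_right_comm, ← hrange]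
  ring

end Mackey

lemma exists_trivial_module {k H : Type} [Field k] [Ring H] [HopfAlgebra k H]
    (K : Subalgebra k H) :
    ∃ (M : Type v) (_ : AddCommGroup M) (_ : Module k M) (_ : Module K M)
      (_ : IsScalarTower k K M) (_ : FiniteDimensional k M) (_ : Nontrivial M),
        ∀ (a : K) (m : M), a • m = Coalgebra.counit (R := k) (a : H) • m := by
  let ε : K →ₐ[k] k := (Bialgebra.counitAlgHom k H).comp K.val
  let _ : Module K (ULift.{v} k) := Module.compHom (ULift.{v} k) ε.toRingHom
  have hsmul : ∀ (a : K) (m : ULift.{v} k), a • m = ε a • m := fun _ _ => rfl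
  refine ⟨ULift.{v} k, inferInstance, inferInstance, inferInstance, ⟨fun r a m => ?_⟩,
    inferInstance, inferInstance, hsmul⟩
  rw [hsmul, hsmul, map_smul, smul_assoc]

section Statements

variable [FiniteDimensional k H] [IsSemisimpleRing H]

/-- Section 4.2: `(L, K)` is a Mackey pair if and only if for
every simple subcoalgebra `C` of `H` one has
`dim_k (LCK) = dim_k L · dim_k (CK) / dim_k (L ∩ ᶜK)` (stated multiplied
out); moreover `(L, K)` is a Mackey pair as soon as the left-multiplication
map `π_k` for the trivial `K`-module `M = k` is an isomorphism. -/
theorem statement_14 (L K : Subalgebra k H)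
    (hL : IsHopfSubalgebra k H L) (hK : IsHopfSubalgebra k H K)
    (Λ : H) (hΛ : IsIdempotentIntegral k H K Λ) :
    (IsMackeyPair.{v} k H L K Λ ↔
      ∀ C : Submodule k H, IsSimpleSubcoalgebra k H C →
        Module.finrank k ↥(L.toSubmodule * C * K.toSubmodule) *
            Module.finrank k ↥(L.toSubmodule ⊓ conjK k H K Λ C) =
          Module.finrank k ↥L * Module.finrank k ↥(CKsub k H K C)) ∧
    ((∀ (M : Type v) [AddCommGroup M] [Module k M] [Module ↥K M]
        [IsScalarTower k ↥K M] [Module.Finite k M],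
        (∀ (a : ↥K) (m : M), a • m = Coalgebra.counit (R := k) (a : H) • m) →
        MackeyAt k H L K Λ M) →
      IsMackeyPair.{v} k H L K Λ) := by
  obtain ⟨T, _, _, _, _, _, _, hT⟩ := exists_trivial_module.{v} K
  refine ⟨⟨fun h C hC => (h T).finrank_eq hL hK hΛ hC, fun h M _ _ _ _ _ =>
    mackeyAt_of_finrank hL hK hΛ h⟩, fun h M _ _ _ _ _ => ?_⟩
  exact mackeyAt_of_finrank hL hK hΛ fun C hC => (h T hT).finrank_eq hL hK hΛ hC

end Statements

end

end MackeyPaper
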